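/- Let (R, m) be a regular local ring of dimension n, and I an ideal such that R/I is equidimensional of dimension d ≥ 2. Fix 1 ≤ i ≤ d−1. Then every prime p in the support of the local cohomology module H^{n−i}_I(R) satisfies ht_R(p) ≥ n − i + 1; equivalently, dim Supp_R H^{n−i}_I(R) ≤ i − 1. -/

import Mathlib

open IsLocalRing CategoryTheory

noncomputable section

universe u

section
namespace LCS

lemma spanFinrank_le_of_card {A : Type u} [CommRing A] {J : Ideal A} (s : Finset A)
    (h : Ideal.span (s : Set A) = J) : J.spanFinrank ≤ s.card := by
  rw [← h, ← Set.ncard_coe_finset]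
  exact Submodule.spanFinrank_span_le_ncard_of_finite s.finite_toSet

lemma exists_finset_span {A : Type u} [CommRing A] [IsNoetherianRing A] (J : Ideal A) :
    ∃ s : Finset A, Ideal.span (s : Set A) = J ∧ s.card = J.spanFinrank := by
  have hfg : J.FG := IsNoetherian.noetherian J
  have hf := Submodule.FG.finite_generators hfg
  refine ⟨hf.toFinset, ?_, ?_⟩
  · simpa using Submodule.span_generators J
  · rw [← Set.ncard_eq_toFinset_card _ hf]
    exact Submodule.FG.generators_ncard hfg

variable (A : Type u) [CommRing A]

lemma quot_local [IsLocalRing A] (x : A) (hx : x ∈ maximalIdeal A) :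
    IsLocalRing (A ⧸ Ideal.span {x}) := by
  have : Nontrivial (A ⧸ Ideal.span {x}) := Ideal.Quotient.nontrivial_iff.mpr (by
    intro h
    have : Ideal.span {x} ≤ maximalIdeal A := by simpa [Ideal.span_le] using hx
    exact (maximalIdeal.isMaximal A).ne_top (top_le_iff.mp (h ▸ this)))
  exact IsLocalRing.of_surjective' (Ideal.Quotient.mk _) Ideal.Quotient.mk_surjective

lemma map_max {A B : Type u} [CommRing A] [CommRing B] [IsLocalRing A] [IsLocalRing B]
    (f : A →+* B) (hf : Function.Surjective f) :
    (maximalIdeal A).map f = maximalIdeal B := by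
  have hl : IsLocalHom f := IsLocalHom.of_surjective f hf
  apply le_antisymm
  · exact ((local_hom_TFAE f).out 0 2).mp hl
  · intro b hb
    obtain ⟨a, rfl⟩ := hf b
    apply Ideal.mem_map_of_mem
    rw [mem_maximalIdeal, mem_nonunits_iff] at hb ⊢
    exact fun h => hb (h.map f)

lemma quot_reg [IsRegularLocalRing A] (x : A) (hx : x ∈ maximalIdeal A)
    (hx2 : x ∉ maximalIdeal A ^ 2) :
    IsRegularLocalRing (A ⧸ Ideal.span {x}) ∧
      ringKrullDim (A ⧸ Ideal.span {x}) + 1 = ringKrullDim A := by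
  classical
  have := quot_local A x hx
  obtain ⟨s, hs, hc⟩ := exists_finset_span (maximalIdeal A)
  have hd := IsRegularLocalRing.spanFinrank_maximalIdeal (R := A)
  have hd1 : ringKrullDim A ≤ ringKrullDim (A ⧸ Ideal.span {x}) + 1 := by
    have := ringKrullDim_le_ringKrullDim_quotient_add_card ({x} : Finset A) (by
      rw [IsLocalRing.ringJacobson_eq_maximalIdeal]; simpa using hx)
    rw [Finset.coe_singleton] at this
    simpa using this
  have hxs : x ∈ Ideal.span (s : Set A) := hs ▸ hx
  obtain ⟨f, -, hf⟩ := Submodule.mem_span_finset.mp hxs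
  have : ∃ y ∈ s, f y ∉ maximalIdeal A := by
    by_contra! hcon
    apply hx2
    rw [← hf, pow_two]
    refine Ideal.sum_mem _ fun y hy => Ideal.mul_mem_mul (hcon y hy) (hs ▸ Ideal.subset_span hy)
  obtain ⟨y, hy, hfy⟩ := this
  have hu : IsUnit (f y) := by simpa [mem_maximalIdeal] using hfy
  set π := Ideal.Quotient.mk (Ideal.span {x})
  have hspan : Ideal.span (((s.erase y).image π : Finset _) : Set (A ⧸ Ideal.span {x})) =
      maximalIdeal (A ⧸ Ideal.span {x}) := by
    rw [← map_max π Ideal.Quotient.mk_surjective, ← hs, Ideal.map_span]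
    apply le_antisymm
    · apply Ideal.span_mono
      rw [Finset.coe_image]
      exact Set.image_mono (by simp)
    · rw [Ideal.span_le]
      rintro _ ⟨z, hz, rfl⟩
      by_cases hzy : z = y
      · subst hzy
        have h1 : π (∑ a ∈ s, f a • a) = 0 := by
          rw [hf, Ideal.Quotient.eq_zero_iff_mem]; exact Ideal.mem_span_singleton_self x
        rw [← Finset.add_sum_erase _ _ hy] at h1
        simp only [smul_eq_mul, map_add, map_mul, map_sum] at h1
        have h2 : π (f z) * π z ∈ Ideal.span
            (((s.erase z).image π : Finset _) : Set (A ⧸ Ideal.span {x})) := by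
          rw [eq_neg_of_add_eq_zero_left h1]
          refine neg_mem (Ideal.sum_mem _ fun w hw => Ideal.mul_mem_left _ _
            (Ideal.subset_span ?_))
          exact Finset.mem_coe.mpr (Finset.mem_image_of_mem π hw)
        exact (Ideal.unit_mul_mem_iff_mem _ (hu.map π)).mp h2
      · apply Ideal.subset_span
        exact Finset.mem_coe.mpr (Finset.mem_image_of_mem π (Finset.mem_erase.mpr ⟨hzy, hz⟩))
  have hle := spanFinrank_le_of_card _ hspan
  have hcard : ((s.erase y).image π).card + 1 ≤ s.card := by
    have := Finset.card_image_le (s := s.erase y) (f := π)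
    have h2 := Finset.card_erase_add_one hy
    omega
  have h3 : (maximalIdeal (A ⧸ Ideal.span {x})).spanFinrank + 1 ≤
    (maximalIdeal A).spanFinrank := by omega
  have h4 := ringKrullDim_le_spanFinrank_maximalIdeal (A ⧸ Ideal.span {x})
  rw [← hd] at hd1
  have h5 : ((maximalIdeal (A ⧸ Ideal.span {x})).spanFinrank : WithBot ℕ∞) + 1 ≤
    (maximalIdeal A).spanFinrank := by exact_mod_cast h3
  have h6 : ((maximalIdeal (A ⧸ Ideal.span {x})).spanFinrank : WithBot ℕ∞) ≤
      ringKrullDim (A ⧸ Ideal.span {x}) := by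
    have h7 := h5.trans hd1
    exact ENat.WithBot.add_le_add_one_right_iff.mp h7
  refine ⟨IsRegularLocalRing.of_spanFinrank_maximalIdeal_le _ h6, ?_⟩
  rw [← hd]
  exact le_antisymm (le_trans (by gcongr) h5) hd1

lemma exists_notMem_sq {A : Type u} [CommRing A] [IsLocalRing A] [IsNoetherianRing A]
    (S : Set (Ideal A)) (hS : S.Finite) (hp : ∀ P ∈ S, P.IsPrime)
    (hm : maximalIdeal A ≠ ⊥) (hSm : ∀ P ∈ S, P ≠ maximalIdeal A) :
    ∃ x ∈ maximalIdeal A, x ∉ maximalIdeal A ^ 2 ∧ ∀ P ∈ S, x ∉ P := by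
  classical
  by_contra! hcon
  have key : ((maximalIdeal A : Ideal A) : Set A) ⊆
      ⋃ i ∈ ((insert (maximalIdeal A ^ 2) hS.toFinset : Finset (Ideal A)) : Set (Ideal A)), (i : Set A) := by
    intro x hx
    by_cases h2 : x ∈ maximalIdeal A ^ 2
    · simp only [Set.mem_iUnion]; exact ⟨_, by simp, h2⟩
    · obtain ⟨P, hP, hxP⟩ := hcon x hx h2
      simp only [Set.mem_iUnion]; exact ⟨P, by simp [hP], hxP⟩
  rw [Ideal.subset_union_prime (maximalIdeal A ^ 2) (maximalIdeal A ^ 2)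
    (fun i hi h1 _ => by
      simp only [Finset.mem_insert, h1, false_or, Set.Finite.mem_toFinset] at hi
      exact hp i hi)] at key
  obtain ⟨i, hi, hle⟩ := key
  simp only [Finset.mem_insert, Set.Finite.mem_toFinset] at hi
  rcases hi with rfl | hi
  · apply hm
    refine Submodule.eq_bot_of_le_smul_of_le_jacobson_bot (maximalIdeal A) _
      (IsNoetherian.noetherian _) ?_ (maximalIdeal_le_jacobson _)
    rwa [smul_eq_mul, ← pow_two]
  · exact hSm i hi (le_antisymm (le_maximalIdeal (hp i hi).ne_top) hle)

lemma field_of_max_bot {A : Type u} [CommRing A] [IsLocalRing A] (h : maximalIdeal A = ⊥) :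
    IsField A := IsLocalRing.isField_iff_maximalIdeal_eq.mpr h

lemma max_ne_bot_of_dim {A : Type u} [CommRing A] [IsLocalRing A] {n : ℕ}
    (h : ringKrullDim A = (n + 1 : ℕ)) : maximalIdeal A ≠ ⊥ := by
  intro h0
  have := field_of_max_bot h0
  rw [ringKrullDim_eq_zero_of_isField this] at h
  have : (0 : ℕ) = n + 1 := by exact_mod_cast h
  omega

lemma reg_domain (n : ℕ) : ∀ (A : Type u) [CommRing A] [IsRegularLocalRing A],
    ringKrullDim A = (n : ℕ) → IsDomain A := by
  induction n with
  | zero =>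
    intro A _ _ h
    have h1 := IsRegularLocalRing.spanFinrank_maximalIdeal (R := A)
    rw [h] at h1
    have h2 : (maximalIdeal A).spanFinrank = 0 := by exact_mod_cast h1
    obtain ⟨s, hs, hc⟩ := exists_finset_span (maximalIdeal A)
    rw [h2, Finset.card_eq_zero] at hc
    subst hc
    exact (field_of_max_bot (by simpa using hs.symm)).isDomain
  | succ n ih =>
    intro A _ _ h
    have hm := max_ne_bot_of_dim h
    obtain ⟨x, hx, hx2, hxP⟩ := exists_notMem_sq (A := A) (minimalPrimes A)
      (minimalPrimes.finite_of_isNoetherianRing A) (fun P hP => hP.1.1) hm (by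
        rintro P hP rfl
        have h0 : (maximalIdeal A).height = 0 := by
          exact Ideal.height_eq_zero_iff.mpr hP
        have h1 := IsLocalRing.maximalIdeal_height_eq_ringKrullDim (R := A)
        rw [h0, h] at h1
        have : (0 : ℕ) = n + 1 := by exact_mod_cast h1
        omega)
    obtain ⟨hr, hd⟩ := quot_reg A x hx hx2
    rw [h] at hd
    have hd' : ringKrullDim (A ⧸ Ideal.span {x}) = (n : ℕ) := by
      push_cast at hd
      simpa using hd
    have := ih _ hd'
    have hprime : (Ideal.span {x}).IsPrime := (Ideal.Quotient.isDomain_iff_prime _).mp this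
    obtain ⟨P, hP, hPx⟩ := Ideal.exists_minimalPrimes_le (I := ⊥) (J := Ideal.span {x}) bot_le
    have hPp : P.IsPrime := hP.1.1
    have : P = ⊥ := by
      refine Submodule.eq_bot_of_le_smul_of_le_jacobson_bot (maximalIdeal A) _
        (IsNoetherian.noetherian _) ?_ (maximalIdeal_le_jacobson _)
      intro y hy
      obtain ⟨a, rfl⟩ := Ideal.mem_span_singleton'.mp (hPx hy)
      have ha : a ∈ P := (hPp.mem_or_mem hy).resolve_right (hxP P hP)
      rw [mul_comm]
      exact Ideal.mul_mem_mul hx ha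
    subst this
    exact IsDomain.of_bot_isPrime A

lemma reg_dim_nat [IsRegularLocalRing A] : ∃ n : ℕ, ringKrullDim A = n :=
  ⟨_, IsRegularLocalRing.spanFinrank_maximalIdeal.symm⟩

lemma reg_isDomain [IsRegularLocalRing A] : IsDomain A :=
  let ⟨n, h⟩ := reg_dim_nat A; reg_domain n A h

end LCS
end

section
open scoped Pointwise
namespace LCS

/-- projective dimension at most `n` -/
def PD (A : Type u) [CommRing A] (n : ℕ) (M : Type u) [AddCommGroup M] [Module A M] : Prop :=
  HasProjectiveDimensionLE (ModuleCat.of A M) n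

lemma PD_zero {A : Type u} [CommRing A] {M : Type u} [AddCommGroup M] [Module A M] :
    PD A 0 M ↔ Module.Projective A M := by
  unfold PD
  rw [← projective_iff_hasProjectiveDimensionLE_zero, ← IsProjective.iff_projective]

lemma PD_succ {A : Type u} [CommRing A] {M F : Type u} [AddCommGroup M] [Module A M]
    [AddCommGroup F] [Module A F] [Module.Projective A F] (f : F →ₗ[A] M)
    (hf : Function.Surjective f) (n : ℕ) : PD A (n + 1) M ↔ PD A n (LinearMap.ker f) := by
  have h := LinearMap.shortExact_shortComplexKer hf
  exact h.hasProjectiveDimensionLT_X₃_iff n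
    ((IsProjective.iff_projective (R := A) F).mp inferInstance)

lemma PD_equiv {A : Type u} [CommRing A] {M N : Type u} [AddCommGroup M] [Module A M]
    [AddCommGroup N] [Module A N] (e : M ≃ₗ[A] N) {n : ℕ} (h : PD A n M) : PD A n N := by
  have : HasProjectiveDimensionLE (ModuleCat.of A M) n := h
  exact hasProjectiveDimensionLT_of_iso e.toModuleIso (n + 1)

lemma PD_retract {A : Type u} [CommRing A] {M N : Type u} [AddCommGroup M] [Module A M]
    [AddCommGroup N] [Module A N] (i : N →ₗ[A] M) (r : M →ₗ[A] N) (h0 : r ∘ₗ i = LinearMap.id)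
    {n : ℕ} (h : PD A n M) : PD A n N := by
  have : HasProjectiveDimensionLE (ModuleCat.of A M) n := h
  let R : Retract (ModuleCat.of A N) (ModuleCat.of A M) :=
    { i := ModuleCat.ofHom i, r := ModuleCat.ofHom r, retract := by
        rw [← ModuleCat.ofHom_comp, h0]; rfl }
  exact R.hasProjectiveDimensionLT (n + 1)

lemma PD_mono {A : Type u} [CommRing A] {M : Type u} [AddCommGroup M] [Module A M]
    {n m : ℕ} (hnm : n ≤ m) (h : PD A n M) : PD A m M := by
  have : HasProjectiveDimensionLE (ModuleCat.of A M) n := h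
  exact hasProjectiveDimensionLT_of_ge _ (n + 1) (m + 1) (by omega)

lemma proj_iff_free {A : Type u} [CommRing A] [IsLocalRing A] [IsNoetherianRing A] {M : Type u}
    [AddCommGroup M] [Module A M] [Module.Finite A M] :
    Module.Projective A M ↔ Module.Free A M := by
  constructor
  · intro h
    have := Module.finitePresentation_of_finite A M
    exact Module.free_of_flat_of_isLocalRing
  · intro h; infer_instance

/-- change of rings -/
lemma PD_quot {A : Type u} [CommRing A] [IsLocalRing A] [IsNoetherianRing A] {x : A}
    (hx : x ∈ maximalIdeal A) (hreg : IsSMulRegular A x) (n : ℕ) :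
    ∀ (K : Type u) [AddCommGroup K] [Module A K] [Module.Finite A K], IsSMulRegular K x →
    (PD (A ⧸ Ideal.span {x}) n (QuotSMulTop x K) ↔ PD A n K) := by
  have := quot_local A x hx
  induction n with
  | zero =>
    intro K _ _ _ hK
    have := Module.finitePresentation_of_finite A K
    have := Module.Finite.of_restrictScalars_finite A (A ⧸ Ideal.span {x}) (QuotSMulTop x K)
    rw [PD_zero, PD_zero, proj_iff_free, proj_iff_free]
    exact Module.free_quotSMulTop_iff_free _ _ (by
      rw [IsLocalRing.jacobson_eq_maximalIdeal _ bot_ne_top]; exact hx) hK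
  | succ n ih =>
    intro K _ _ _ hK
    obtain ⟨k, f, hf⟩ := Module.Finite.exists_fin' A K
    rw [PD_succ f hf]
    have hL : IsSMulRegular (LinearMap.ker f) x := by
      intro a b hab
      have hab' : x • (a : Fin k → A) = x • (b : Fin k → A) := congrArg Subtype.val hab
      apply Subtype.ext
      funext i
      exact hreg (congrFun hab' i)
    rw [← ih _ hL]
    have hsurj : Function.Surjective (algebraMap A (A ⧸ Ideal.span {x})) :=
      Ideal.Quotient.mk_surjective
    let g : QuotSMulTop x (Fin k → A) →ₗ[A ⧸ Ideal.span {x}] QuotSMulTop x K :=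
      (QuotSMulTop.map x f).extendScalarsOfSurjective hsurj
    have hg : Function.Surjective g := QuotSMulTop.map_surjective x hf
    have : Module.Projective (A ⧸ Ideal.span {x}) (QuotSMulTop x (Fin k → A)) := by
      have : Module.Free (A ⧸ Ideal.span {x}) (QuotSMulTop x (Fin k → A)) := inferInstance
      infer_instance
    rw [PD_succ g hg]
    let φ : QuotSMulTop x (LinearMap.ker f) →ₗ[A ⧸ Ideal.span {x}] QuotSMulTop x (Fin k → A) :=
      (QuotSMulTop.map x (LinearMap.ker f).subtype).extendScalarsOfSurjective hsurj
    have hex : Function.Exact φ g := QuotSMulTop.map_exact x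
      (by intro a; simp) hf
    have hφ : Function.Injective φ := by
      rw [injective_iff_map_eq_zero]
      intro a ha
      obtain ⟨a, rfl⟩ := Submodule.mkQ_surjective _ a
      have h1 : Submodule.mkQ (x • ⊤ : Submodule A (Fin k → A)) (a : Fin k → A) = 0 := ha
      rw [Submodule.mkQ_apply, Submodule.Quotient.mk_eq_zero,
        Submodule.mem_smul_pointwise_iff_exists] at h1
      obtain ⟨w, -, hw⟩ := h1
      have hw2 : f w = 0 := by
        apply hK
        change x • f w = x • 0
        rw [← map_smul, hw, smul_zero]; exact a.2
      rw [Submodule.mkQ_apply, Submodule.Quotient.mk_eq_zero,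
        Submodule.mem_smul_pointwise_iff_exists]
      exact ⟨⟨w, hw2⟩, trivial, Subtype.ext hw⟩
    have e : QuotSMulTop x (LinearMap.ker f) ≃ₗ[A ⧸ Ideal.span {x}] LinearMap.ker g :=
      (LinearEquiv.ofInjective φ hφ).trans (LinearEquiv.ofEq _ _ (LinearMap.exact_iff.mp hex).symm)
    exact ⟨PD_equiv e.symm, PD_equiv e⟩

/-- finite global dimension of regular local rings -/
lemma PD_reg (h : ℕ) : ∀ (A : Type u) [CommRing A] [IsRegularLocalRing A]
    (_ : ringKrullDim A = (h : ℕ)) (M : Type u) [AddCommGroup M] [Module A M] [Module.Finite A M],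
    PD A h M := by
  induction h with
  | zero =>
    intro A _ _ hd M _ _ _
    rw [PD_zero]
    have h0 : maximalIdeal A = ⊥ := by
      have := IsRegularLocalRing.spanFinrank_maximalIdeal (R := A)
      rw [hd] at this
      have h1 : (maximalIdeal A).spanFinrank = 0 := by exact_mod_cast this
      exact (Submodule.spanFinrank_eq_zero_iff_eq_bot (IsNoetherian.noetherian _)).mp h1
    let _ := (field_of_max_bot h0).toField
    infer_instance
  | succ h ih =>
    intro A _ _ hd M _ _ _
    have hdom := reg_isDomain A
    obtain ⟨x, hx, hx2, -⟩ := exists_notMem_sq (A := A) ∅ (Set.finite_empty) (by simp)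
      (max_ne_bot_of_dim hd) (by simp)
    have hx0 : x ≠ 0 := by rintro rfl; exact hx2 (zero_mem _)
    obtain ⟨h1, h2⟩ := quot_reg A x hx hx2
    obtain ⟨k, f, hf⟩ := Module.Finite.exists_fin' A M
    have hreg : IsSMulRegular A x := (IsRegular.of_ne_zero hx0).left
    have hL : IsSMulRegular (LinearMap.ker f) x := by
      intro a b hab
      have hab' : x • (a : Fin k → A) = x • (b : Fin k → A) := congrArg Subtype.val hab
      apply Subtype.ext
      funext i
      exact hreg (congrFun hab' i)
    rw [PD_succ f hf, ← PD_quot hx hreg h _ hL]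
    have := Module.Finite.of_restrictScalars_finite A (A ⧸ Ideal.span {x})
      (QuotSMulTop x (LinearMap.ker f))
    apply ih
    rw [hd] at h2
    have : ((h + 1 : ℕ) : WithBot ℕ∞) = (h : WithBot ℕ∞) + 1 := by push_cast; rfl
    rw [this] at h2
    have := ENat.WithBot.add_le_add_one_right_iff.mp h2.le
    exact le_antisymm this (ENat.WithBot.add_le_add_one_right_iff.mp h2.ge)

end LCS
end

section
open scoped Pointwise
namespace LCS

lemma exists_min_cover {A : Type u} [CommRing A] [IsLocalRing A] (M : Type u)
    [AddCommGroup M] [Module A M] [Module.Finite A M] :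
    ∃ (k : ℕ) (f : (Fin k → A) →ₗ[A] M), Function.Surjective f ∧
      ∀ v, f v = 0 → ∀ i, v i ∈ maximalIdeal A := by
  classical
  have hex : ∃ k : ℕ, ∃ f : (Fin k → A) →ₗ[A] M, Function.Surjective f :=
    Module.Finite.exists_fin' A M
  obtain ⟨f, hf⟩ := Nat.find_spec hex
  refine ⟨Nat.find hex, f, hf, ?_⟩
  have hmin := fun m => Nat.find_min hex (m := m)
  generalize Nat.find hex = k at *
  intro v hv i
  by_contra hi
  have hu : IsUnit (v i) := by
    by_contra h; exact hi ((mem_maximalIdeal _).mpr h)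
  obtain ⟨b, hb⟩ := hu.exists_left_inv
  obtain _ | k := k
  · exact i.elim0
  let g : (Fin k → A) →ₗ[A] (Fin (k + 1) → A) :=
    { toFun := fun w => Fin.insertNth i 0 w
      map_add' := by
        intro a b; funext j
        refine Fin.succAboveCases i ?_ ?_ j <;> simp
      map_smul' := by
        intro a b; funext j
        refine Fin.succAboveCases i ?_ ?_ j <;> simp }
  refine hmin k (by omega) ⟨f ∘ₗ g, ?_⟩
  intro m
  obtain ⟨w, rfl⟩ := hf m
  refine ⟨i.removeNth (w - (w i * b) • v), ?_⟩
  have h0 : (w - (w i * b) • v) i = 0 := by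
    simp [mul_assoc, hb]
  have : g (i.removeNth (w - (w i * b) • v)) = w - (w i * b) • v := by
    change Fin.insertNth i 0 (i.removeNth (w - (w i * b) • v)) = _
    conv_lhs => rw [← h0]
    exact Fin.insertNth_self_removeNth i _
  rw [LinearMap.comp_apply, this]
  simp [hv]

lemma depth_zero_free {A : Type u} [CommRing A] [IsLocalRing A] [IsNoetherianRing A]
    (z : A) (hz : z ≠ 0) (hmz : ∀ a ∈ maximalIdeal A, a * z = 0) (n : ℕ) :
    ∀ (M : Type u) [AddCommGroup M] [Module A M] [Module.Finite A M], PD A n M →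
    Module.Free A M := by
  induction n with
  | zero =>
    intro M _ _ _ h
    exact proj_iff_free.mp (PD_zero.mp h)
  | succ n ih =>
    intro M _ _ _ h
    obtain ⟨k, f, hf, hm⟩ := exists_min_cover (A := A) M
    rw [PD_succ f hf] at h
    have hfree := ih _ h
    have hz0 : ∀ v : LinearMap.ker f, z • v = 0 := by
      intro v
      apply Subtype.ext
      funext i
      have := hmz _ (hm v.1 v.2 i)
      simpa [mul_comm] using this
    have hsub : Subsingleton (LinearMap.ker f) := by
      by_contra hne
      rw [not_subsingleton_iff_nontrivial] at hne
      let b := Module.Free.chooseBasis A (LinearMap.ker f)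
      obtain ⟨i⟩ := b.index_nonempty
      have h1 := congrArg (fun w => b.repr w i) (hz0 (b i))
      simp at h1
      exact hz h1
    have hinj : Function.Injective f := by
      rw [← LinearMap.ker_eq_bot]
      exact Submodule.subsingleton_iff_eq_bot.mp hsub
    exact Module.Free.of_equiv (LinearEquiv.ofBijective f ⟨hinj, hf⟩)

lemma reg_of_quot {A : Type u} [CommRing A] [IsLocalRing A] [IsNoetherianRing A] (x : A)
    (hx : x ∈ maximalIdeal A) (hreg : IsSMulRegular A x)
    (h : IsRegularLocalRing (A ⧸ Ideal.span {x})) : IsRegularLocalRing A := by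
  classical
  have hd := ringKrullDim_quotient_span_singleton_succ_eq_ringKrullDim hreg hx
  apply IsRegularLocalRing.of_spanFinrank_maximalIdeal_le
  rw [← hd, ← IsRegularLocalRing.spanFinrank_maximalIdeal (R := A ⧸ Ideal.span {x})]
  obtain ⟨s, hs, hc⟩ := exists_finset_span (maximalIdeal (A ⧸ Ideal.span {x}))
  let q := Ideal.Quotient.mk (Ideal.span {x})
  have hq : Function.Surjective q := Ideal.Quotient.mk_surjective
  let l := Function.surjInv hq
  have hsp : Ideal.span ((insert x (s.image l) : Finset A) : Set A) = maximalIdeal A := by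
    have h1 : (maximalIdeal A).map q = maximalIdeal _ := map_max q hq
    have h2 : (Ideal.span ((s.image l : Finset A) : Set A)).map q = maximalIdeal _ := by
      rw [Ideal.map_span, ← hs]
      congr 1
      ext y
      simp [l, Function.surjInv_eq hq]
    have h3 : Ideal.span {x} ≤ maximalIdeal A := by simpa [Ideal.span_le] using hx
    rw [Finset.coe_insert, Ideal.span_insert]
    have h4 := congrArg (Ideal.comap q) (h1.trans h2.symm)
    rw [Ideal.comap_map_of_surjective q hq, Ideal.comap_map_of_surjective q hq] at h4
    have h5 : Ideal.comap q ⊥ = Ideal.span {x} := by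
      rw [← RingHom.ker_eq_comap_bot, Ideal.mk_ker]
    rw [h5, sup_eq_left.mpr h3] at h4
    rw [h4, sup_comm]
  have h6 := spanFinrank_le_of_card _ hsp
  have h7 : (insert x (s.image l) : Finset A).card ≤ s.card + 1 :=
    (Finset.card_insert_le _ _).trans (by simpa using Finset.card_image_le)
  rw [hc] at h7
  exact_mod_cast h6.trans h7

/-- the maximal ideal modulo x is a retract -/
lemma PD_max_quot {A : Type u} [CommRing A] [IsLocalRing A] [IsNoetherianRing A] (x : A)
    (hx : x ∈ maximalIdeal A) (hx2 : x ∉ maximalIdeal A ^ 2) (m : Ideal (A ⧸ Ideal.span {x}))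
    (hm : m = (maximalIdeal A).map (Ideal.Quotient.mk (Ideal.span {x}))) (n : ℕ)
    (h : PD (A ⧸ Ideal.span {x}) n (QuotSMulTop x (maximalIdeal A))) :
    PD (A ⧸ Ideal.span {x}) n m := by
  have hsurj : Function.Surjective (algebraMap A (A ⧸ Ideal.span {x})) :=
    Ideal.Quotient.mk_surjective
  let q : maximalIdeal A →ₗ[A] m :=
    { toFun := fun a => ⟨Ideal.Quotient.mk _ a.1, by rw [hm]; exact Ideal.mem_map_of_mem _ a.2⟩
      map_add' := fun a b => Subtype.ext (by simp)
      map_smul' := fun a b => Subtype.ext (by simp [Algebra.smul_def]) }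
  have hq : Function.Surjective q := by
    rintro ⟨b, hb⟩
    rw [hm] at hb
    obtain ⟨a, ha, rfl⟩ := (Ideal.mem_map_iff_of_surjective _ hsurj).mp hb
    exact ⟨⟨a, ha⟩, rfl⟩
  have hqx : q ⟨x, hx⟩ = 0 := Subtype.ext (by
    simp [q])
  let x' : QuotSMulTop x (maximalIdeal A) := Submodule.mkQ _ ⟨x, hx⟩
  let ι : (A ⧸ maximalIdeal A) →ₗ[A] QuotSMulTop x (maximalIdeal A) :=
    Submodule.liftQ _ (LinearMap.toSpanSingleton A _ x') (by
      intro a ha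
      rw [LinearMap.mem_ker, LinearMap.toSpanSingleton_apply]
      change a • Submodule.mkQ _ _ = 0
      rw [← map_smul, Submodule.mkQ_apply, Submodule.Quotient.mk_eq_zero,
        Submodule.mem_smul_pointwise_iff_exists]
      exact ⟨⟨a, ha⟩, trivial, Subtype.ext (by simp [mul_comm])⟩)
  obtain ⟨lam0, hlam0⟩ := Module.Projective.exists_dual_eq_one (ResidueField A)
    (V := CotangentSpace A) (x := (maximalIdeal A).toCotangent ⟨x, hx⟩) (by
      rw [Ne, Ideal.toCotangent_eq_zero]; exact hx2)
  let lam : maximalIdeal A →ₗ[A] (A ⧸ maximalIdeal A) :=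
    (lam0.restrictScalars A) ∘ₗ (maximalIdeal A).toCotangent
  have hlam : lam ⟨x, hx⟩ = (Submodule.Quotient.mk 1) := hlam0
  let σ : maximalIdeal A →ₗ[A] QuotSMulTop x (maximalIdeal A) :=
    Submodule.mkQ _ - ι ∘ₗ lam
  have hσx : σ ⟨x, hx⟩ = 0 := by
    change Submodule.mkQ _ _ - ι (lam _) = 0
    rw [hlam]
    change _ - (1 : A) • x' = 0
    rw [one_smul, sub_self]
  have hker : LinearMap.ker q ≤ LinearMap.ker σ := by
    intro a ha
    have h1 : Ideal.Quotient.mk (Ideal.span {x}) a.1 = 0 := congrArg Subtype.val ha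
    rw [Ideal.Quotient.eq_zero_iff_mem, Ideal.mem_span_singleton'] at h1
    obtain ⟨c, hc⟩ := h1
    have : a = c • ⟨x, hx⟩ := Subtype.ext hc.symm
    rw [this, LinearMap.mem_ker, map_smul, hσx, smul_zero]
  let i0 : m →ₗ[A] QuotSMulTop x (maximalIdeal A) :=
    (LinearMap.ker q).liftQ σ hker ∘ₗ (q.quotKerEquivOfSurjective hq).symm.toLinearMap
  have hi0 : ∀ a, i0 (q a) = σ a := by
    intro a
    have : (q.quotKerEquivOfSurjective hq).symm (q a) = Submodule.Quotient.mk a := by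
      rw [LinearEquiv.symm_apply_eq]; rfl
    simp only [i0, LinearMap.comp_apply, LinearEquiv.coe_coe, this]
    rfl
  let r0 : QuotSMulTop x (maximalIdeal A) →ₗ[A] m :=
    Submodule.liftQ _ q (by
      intro a ha
      rw [Submodule.mem_smul_pointwise_iff_exists] at ha
      obtain ⟨b, -, rfl⟩ := ha
      refine Subtype.ext ?_
      change Ideal.Quotient.mk (Ideal.span {x}) (x * b.1) = 0
      rw [Ideal.Quotient.eq_zero_iff_mem]
      exact Ideal.mul_mem_right _ _ (Ideal.mem_span_singleton_self x))
  have hr0 : ∀ a, r0 (Submodule.mkQ _ a) = q a := fun a => rfl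
  refine PD_retract (i0.extendScalarsOfSurjective hsurj) (r0.extendScalarsOfSurjective hsurj)
    ?_ h
  ext1 b
  obtain ⟨a, rfl⟩ := hq b
  change r0 (i0 (q a)) = q a
  rw [hi0]
  change r0 (Submodule.mkQ _ a - ι (lam a)) = q a
  obtain ⟨c, hc⟩ := Submodule.Quotient.mk_surjective _ (lam a)
  rw [← hc]
  change r0 (Submodule.mkQ _ a - c • Submodule.mkQ _ _) = q a
  rw [map_sub, map_smul, hr0, hr0, hqx, smul_zero, sub_zero]

lemma reg_of_PD (h : ℕ) : ∀ (A : Type u) [CommRing A] [IsLocalRing A] [IsNoetherianRing A]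
    (_ : ringKrullDim A = (h : ℕ)) (n : ℕ) (_ : PD A n (A ⧸ maximalIdeal A)),
    IsRegularLocalRing A := by
  have key : ∀ (A : Type u) [CommRing A] [IsLocalRing A] [IsNoetherianRing A]
      (n : ℕ) (_ : PD A n (A ⧸ maximalIdeal A)) (_ : maximalIdeal A ≠ ⊥),
      ∃ x ∈ maximalIdeal A, x ∉ maximalIdeal A ^ 2 ∧ IsSMulRegular A x := by
    intro A _ _ _ n hn hb
    by_cases hass : maximalIdeal A ∈ associatedPrimes A A
    · exfalso
      obtain ⟨-, z, hz⟩ := isAssociatedPrime_iff.mp hass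
      have hz0 : z ≠ 0 := by
        rintro rfl
        have : (1 : A) ∈ maximalIdeal A := by rw [hz]; simp [Submodule.mem_colon_singleton]
        exact (Ideal.ne_top_iff_one _).mp (maximalIdeal.isMaximal A).ne_top this
      have hmz : ∀ a ∈ maximalIdeal A, a * z = 0 := by
        intro a ha; rw [hz, Submodule.mem_colon_singleton] at ha; simpa using ha
      have hfree := depth_zero_free z hz0 hmz n _ hn
      have hzm : z ∈ maximalIdeal A := by
        by_contra hzm
        have hu : IsUnit z := by
          by_contra h; exact hzm ((mem_maximalIdeal _).mpr h)
        apply hb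
        rw [eq_bot_iff]
        intro a ha
        exact (hu.mul_left_eq_zero).mp (hmz a ha)
      have : Nontrivial (A ⧸ maximalIdeal A) := Ideal.Quotient.nontrivial_iff.mpr
        (maximalIdeal.isMaximal A).ne_top
      let b := Module.Free.chooseBasis A (A ⧸ maximalIdeal A)
      obtain ⟨i⟩ := b.index_nonempty
      have h0 : z • b i = 0 := by
        obtain ⟨c, hc⟩ := Ideal.Quotient.mk_surjective (b i)
        rw [← hc, Algebra.smul_def]
        change Ideal.Quotient.mk _ z * _ = 0
        rw [Ideal.Quotient.eq_zero_iff_mem.mpr hzm, zero_mul]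
      have h1 := congrArg (fun w => b.repr w i) h0
      simp at h1
      exact hz0 h1
    · obtain ⟨x, hx, hx2, hx3⟩ := exists_notMem_sq (associatedPrimes A A)
        (associatedPrimes.finite A A) (fun P hP => hP.1) hb (fun P hP h => hass (h ▸ hP))
      refine ⟨x, hx, hx2, ?_⟩
      have h1 := biUnion_associatedPrimes_eq_compl_regular A A
      by_contra h2
      have h3 : x ∈ {r : A | IsSMulRegular A r}ᶜ := h2
      rw [← h1] at h3
      simp only [Set.mem_iUnion] at h3
      obtain ⟨P, hP, hxP⟩ := h3
      exact hx3 P hP hxP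
  have bot : ∀ (A : Type u) [CommRing A] [IsLocalRing A] [IsNoetherianRing A],
      maximalIdeal A = ⊥ → IsRegularLocalRing A := by
    intro A _ _ _ hb
    apply IsRegularLocalRing.of_spanFinrank_maximalIdeal_le
    rw [hb]
    simpa using ringKrullDim_nonneg_of_nontrivial (R := A)
  induction h with
  | zero =>
    intro A _ _ _ hd n hn
    by_cases hb : maximalIdeal A = ⊥
    · exact bot A hb
    · exfalso
      obtain ⟨x, hx, -, hreg⟩ := key A n hn hb
      have h1 := ringKrullDim_quotient_span_singleton_succ_eq_ringKrullDim hreg hx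
      have := quot_local A x hx
      have h2 : 0 ≤ ringKrullDim (A ⧸ Ideal.span {x}) := ringKrullDim_nonneg_of_nontrivial
      rw [hd] at h1
      have h3 : (0 : WithBot ℕ∞) + 1 ≤ ((0 : ℕ) : WithBot ℕ∞) := h1 ▸ add_le_add_left h2 1
      have h4 : ((1 : ℕ) : WithBot ℕ∞) ≤ ((0 : ℕ) : WithBot ℕ∞) := by simpa using h3
      have : (1 : ℕ) ≤ 0 := by exact_mod_cast h4
      omega
  | succ h ih =>
    intro A _ _ _ hd n hn
    by_cases hb : maximalIdeal A = ⊥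
    · exact bot A hb
    · obtain ⟨x, hx, hx2, hreg⟩ := key A n hn hb
      have h2 := ringKrullDim_quotient_span_singleton_succ_eq_ringKrullDim hreg hx
      have hl := quot_local A x hx
      refine reg_of_quot x hx hreg ?_
      have hd' : ringKrullDim (A ⧸ Ideal.span {x}) = (h : ℕ) := by
        rw [hd] at h2
        have : ((h + 1 : ℕ) : WithBot ℕ∞) = (h : WithBot ℕ∞) + 1 := by push_cast; rfl
        rw [this] at h2
        exact le_antisymm (ENat.WithBot.add_le_add_one_right_iff.mp h2.le)
          (ENat.WithBot.add_le_add_one_right_iff.mp h2.ge)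
      refine ih _ hd' (n + 1) ?_
      have hs : Function.Surjective (Submodule.mkQ (maximalIdeal (A ⧸ Ideal.span {x}))) :=
        Submodule.mkQ_surjective _
      refine (PD_succ (Submodule.mkQ (maximalIdeal (A ⧸ Ideal.span {x}))) hs n).mpr ?_
      rw [Submodule.ker_mkQ]
      refine PD_max_quot x hx hx2 _ (map_max _ Ideal.Quotient.mk_surjective).symm n ?_
      have hregm : IsSMulRegular (maximalIdeal A) x := by
        intro a b hab
        exact Subtype.ext (hreg (congrArg Subtype.val hab))
      rw [PD_quot hx hreg n _ hregm]
      have h5 := (PD_succ (Submodule.mkQ (maximalIdeal A)) (Submodule.mkQ_surjective _) n).mp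
        (PD_mono (Nat.le_succ n) hn)
      rwa [Submodule.ker_mkQ] at h5

lemma reg_localization (A : Type u) [CommRing A] [IsRegularLocalRing A] (p : Ideal A)
    [p.IsPrime] : IsRegularLocalRing (Localization.AtPrime p) := by
  obtain ⟨n, hn⟩ := reg_dim_nat A
  have h1 : HasProjectiveDimensionLE (ModuleCat.of A (A ⧸ p)) n := PD_reg n A hn (A ⧸ p)
  have h2 := ModuleCat.localizedModule_hasProjectiveDimensionLE n p.primeCompl
    (ModuleCat.of A (A ⧸ p))
  have h3 : PD (Localization.AtPrime p) n (LocalizedModule p.primeCompl (A ⧸ p)) :=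
    PD_equiv (Shrink.linearEquiv (Localization.AtPrime p)
      (LocalizedModule p.primeCompl (A ⧸ p))) h2
  let g : Localization.AtPrime p →ₗ[Localization.AtPrime p]
      LocalizedModule p.primeCompl (A ⧸ p) :=
    LinearMap.toSpanSingleton _ _ (LocalizedModule.mk 1 1)
  have hg : ∀ (r : A) (s : p.primeCompl), g (Localization.mk r s) =
      LocalizedModule.mk (Ideal.Quotient.mk p r) s := by
    intro r s
    change Localization.mk r s • LocalizedModule.mk (1 : A ⧸ p) (1 : p.primeCompl) = _
    rw [LocalizedModule.mk_smul_mk, mul_one, Algebra.smul_def, mul_one]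
    rfl
  have hsurj : Function.Surjective g := by
    intro y
    induction y with
    | h m s =>
    obtain ⟨r, rfl⟩ := Ideal.Quotient.mk_surjective m
    exact ⟨Localization.mk r s, hg r s⟩
  have hker : LinearMap.ker g = maximalIdeal (Localization.AtPrime p) := by
    ext y
    induction y using Localization.ind with
    | H y =>
    obtain ⟨r, s⟩ := y
    rw [LinearMap.mem_ker, hg, Localization.mk_eq_mk',
      IsLocalization.AtPrime.mk'_mem_maximal_iff (Localization.AtPrime p) p,
      ← LocalizedModule.zero_mk s, LocalizedModule.mk_eq]
    constructor
    · rintro ⟨u, hu⟩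
      have h5 : Ideal.Quotient.mk p (u.1 * (s.1 * r)) = 0 := by
        have h6 : u • s • (Ideal.Quotient.mk p) r = 0 := by simpa using hu
        exact h6
      rw [Ideal.Quotient.eq_zero_iff_mem] at h5
      exact ((Ideal.IsPrime.mem_or_mem ‹_›
        ((Ideal.IsPrime.mem_or_mem ‹_› h5).resolve_left u.2)).resolve_left s.2)
    · intro h
      refine ⟨1, ?_⟩
      rw [Ideal.Quotient.eq_zero_iff_mem.mpr h]
  have e : LocalizedModule p.primeCompl (A ⧸ p) ≃ₗ[Localization.AtPrime p]
      (Localization.AtPrime p ⧸ maximalIdeal (Localization.AtPrime p)) :=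
    (g.quotKerEquivOfSurjective hsurj).symm.trans (Submodule.quotEquivOfEq _ _ hker)
  have hht : p.height ≠ ⊤ := Ideal.height_ne_top (Ideal.IsPrime.ne_top ‹_›)
  obtain ⟨k, hk⟩ := ENat.ne_top_iff_exists.mp hht
  refine reg_of_PD k _ ?_ n (PD_equiv e h3)
  rw [IsLocalization.AtPrime.ringKrullDim_eq_height p (Localization.AtPrime p), ← hk]
  rfl

end LCS
end

section
namespace LCS

section noeth
variable {A B : Type u} [CommRing A] [CommRing B] [Algebra A B]

lemma dense_pow (I : Ideal A)
    (hd : ∀ b : B, ∃ a : A, b - algebraMap A B a ∈ I.map (algebraMap A B)) (k : ℕ) (b : B)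
    (hb : b ∈ (I.map (algebraMap A B)) ^ k) :
    ∃ a ∈ I ^ k, b - algebraMap A B a ∈ (I.map (algebraMap A B)) ^ (k + 1) := by
  rw [← Ideal.map_pow] at hb
  induction hb using Submodule.span_induction with
  | mem x hx =>
    obtain ⟨a, ha, rfl⟩ := hx
    exact ⟨a, ha, by simp⟩
  | zero => exact ⟨0, zero_mem _, by simp⟩
  | add x y hx hy ihx ihy =>
    obtain ⟨a, ha, ha'⟩ := ihx
    obtain ⟨c, hc, hc'⟩ := ihy
    refine ⟨a + c, add_mem ha hc, ?_⟩
    have : x + y - algebraMap A B (a + c) = (x - algebraMap A B a) + (y - algebraMap A B c) := by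
      rw [map_add]; ring
    rw [this]; exact add_mem ha' hc'
  | smul r x hx ih =>
    obtain ⟨a, ha, ha'⟩ := ih
    obtain ⟨c, hc⟩ := hd r
    refine ⟨c * a, Ideal.mul_mem_left _ _ ha, ?_⟩
    have : r • x - algebraMap A B (c * a) = r * (x - algebraMap A B a) +
        (r - algebraMap A B c) * algebraMap A B a := by
      rw [map_mul, smul_eq_mul]; ring
    rw [this]
    refine add_mem (Ideal.mul_mem_left _ _ ha') ?_
    rw [pow_succ']
    refine Ideal.mul_mem_mul hc ?_
    rw [← Ideal.map_pow]
    exact Ideal.mem_map_of_mem _ ha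

/-- auxiliary ideal of the Rees algebra -/
def reesL (I : Ideal A) (J : Ideal B) : Ideal (reesAlgebra I) where
  carrier := {F | ∀ k, algebraMap A B (F.1.coeff k) ∈ J ⊔ (I.map (algebraMap A B)) ^ (k + 1)}
  add_mem' := by
    intro F G hF hG k
    have : algebraMap A B ((F + G).1.coeff k) = algebraMap A B (F.1.coeff k) +
      algebraMap A B (G.1.coeff k) := by simp
    rw [this]; exact add_mem (hF k) (hG k)
  zero_mem' := by intro k; simp
  smul_mem' := by
    intro G F hF k
    have : (G • F).1.coeff k = ∑ x ∈ Finset.HasAntidiagonal.antidiagonal k, G.1.coeff x.1 * F.1.coeff x.2 :=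
      Polynomial.coeff_mul _ _ _
    rw [this, map_sum]
    refine sum_mem fun x hx => ?_
    rw [Finset.HasAntidiagonal.mem_antidiagonal] at hx
    rw [map_mul]
    have h1 := hF x.2
    have h2 : algebraMap A B (G.1.coeff x.1) ∈ (I.map (algebraMap A B)) ^ x.1 := by
      rw [← Ideal.map_pow]; exact Ideal.mem_map_of_mem _ (G.2 x.1)
    have h3 := Ideal.mul_mem_mul h2 h1
    rw [Ideal.mul_sup, ← pow_add] at h3
    have h4 : (I.map (algebraMap A B)) ^ (x.1 + (x.2 + 1)) ≤ (I.map (algebraMap A B)) ^ (k + 1) :=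
      Ideal.pow_le_pow_right (by omega)
    have h5 : (I.map (algebraMap A B)) ^ x.1 * J ≤ J := Ideal.mul_le_right
    exact (sup_le_sup h5 h4 : _ ≤ J ⊔ (I.map (algebraMap A B)) ^ (k + 1)) h3

lemma noeth_step (I : Ideal A) [IsNoetherianRing A] (J : Ideal B)
    (hd : ∀ b : B, ∃ a : A, b - algebraMap A B a ∈ I.map (algebraMap A B)) :
    ∃ (ι : Type u) (_ : Fintype ι) (g : ι → B) (d : ι → ℕ) (D : ℕ), (∀ i, d i ≤ D) ∧
      (∀ i, g i ∈ J) ∧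
      ∀ k, ∀ j ∈ J, j ∈ (I.map (algebraMap A B)) ^ k → ∃ c : ι → B,
        (∀ i, c i ∈ (I.map (algebraMap A B)) ^ (k - d i)) ∧
        j - ∑ i, c i * g i ∈ (I.map (algebraMap A B)) ^ (k + 1) := by
  classical
  set K := I.map (algebraMap A B) with hK
  obtain ⟨S, hS⟩ : (reesL I J).FG := IsNoetherian.noetherian _
  let D := S.sup (fun F => F.1.natDegree) + 1
  have hSL : ∀ F ∈ S, F ∈ reesL I J := fun F hF => by
    rw [← hS]; exact Submodule.subset_span hF
  have hch : ∀ (x : S × Fin D), ∃ g ∈ J,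
      algebraMap A B (x.1.1.1.coeff x.2) - g ∈ K ^ ((x.2 : ℕ) + 1) := by
    intro x
    obtain ⟨g, hg, y, hy, he⟩ := Submodule.mem_sup.mp (hSL x.1.1 x.1.2 x.2)
    exact ⟨g, hg, by rw [← he]; simpa using hy⟩
  choose g hgJ hg using hch
  refine ⟨S × Fin D, inferInstance, g, fun x => x.2, D, fun x => x.2.2.le, hgJ, ?_⟩
  intro k j hj hjk
  obtain ⟨a, ha, hja⟩ := dense_pow I hd k j hjk
  have hmon : (⟨Polynomial.monomial k a, reesAlgebra.monomial_mem.mpr ha⟩ : reesAlgebra I) ∈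
      reesL I J := by
    intro l
    change algebraMap A B ((Polynomial.monomial k a).coeff l) ∈ _
    rw [Polynomial.coeff_monomial]
    split_ifs with h
    · subst h
      have : algebraMap A B a = j + -(j - algebraMap A B a) := by ring
      rw [this]
      exact Submodule.add_mem_sup hj (neg_mem hja)
    · simp
  rw [← hS, Submodule.mem_span_finset] at hmon
  obtain ⟨G, -, hG⟩ := hmon
  have hcoef : a = ∑ F ∈ S, ∑ x ∈ Finset.range D,
      if x ≤ k then (G F).1.coeff (k - x) * F.1.coeff x else 0 := by
    have h1 := congrArg (fun P : reesAlgebra I => P.1.coeff k) hG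
    simp only [Polynomial.coeff_monomial, if_true] at h1
    rw [← h1]
    rw [AddSubmonoidClass.coe_finsetSum, Polynomial.finsetSum_coeff]
    refine Finset.sum_congr rfl fun F hF => ?_
    have h2 : (G F • F).1.coeff k = (F.1 * (G F).1).coeff k := by
      rw [mul_comm]; rfl
    rw [h2, Polynomial.coeff_mul, Finset.Nat.sum_antidiagonal_eq_sum_range_succ_mk,
      ← Finset.sum_filter]
    symm
    apply Finset.sum_subset_zero_on_sdiff
    · intro x hx
      simp only [Finset.mem_filter, Finset.mem_range] at hx ⊢
      omega
    · intro x hx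
      simp only [Finset.mem_filter, Finset.mem_range, Finset.mem_sdiff] at hx
      have h3 : F.1.natDegree ≤ S.sup (fun F => F.1.natDegree) :=
        Finset.le_sup (f := fun F : reesAlgebra I => F.1.natDegree) hF
      rw [Polynomial.coeff_eq_zero_of_natDegree_lt (p := F.1) (by omega), zero_mul]
    · intro x hx
      rw [mul_comm]
  let c : S × Fin D → B := fun x =>
    if (x.2 : ℕ) ≤ k then algebraMap A B ((G x.1.1).1.coeff (k - x.2)) else 0
  have hc : ∀ i, c i ∈ K ^ (k - (i.2 : ℕ)) := by
    intro x
    simp only [c]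
    split_ifs
    · rw [hK, ← Ideal.map_pow]; exact Ideal.mem_map_of_mem _ ((G x.1.1).2 _)
    · exact zero_mem _
  refine ⟨c, hc, ?_⟩
  have hcoef' : algebraMap A B a = ∑ x : S × Fin D, c x * algebraMap A B (x.1.1.1.coeff x.2) := by
    rw [hcoef, Fintype.sum_prod_type, map_sum, ← Finset.sum_coe_sort S]
    refine Finset.sum_congr rfl fun F _ => ?_
    rw [map_sum, ← Fin.sum_univ_eq_sum_range
      (fun x => algebraMap A B (if x ≤ k then (G F).1.coeff (k - x) * F.1.1.coeff x else 0))]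
    refine Finset.sum_congr rfl fun x _ => ?_
    simp only [c]
    split_ifs <;> simp
  have : j - ∑ i, c i * g i = (j - algebraMap A B a) +
      ∑ i, c i * (algebraMap A B (i.1.1.1.coeff i.2) - g i) := by
    simp only [mul_sub, Finset.sum_sub_distrib]
    rw [← hcoef']; ring
  rw [this]
  refine add_mem hja (sum_mem fun i _ => ?_)
  have h5 := Ideal.mul_mem_mul (hc i) (hg i)
  rw [← pow_add] at h5
  by_cases hik : (i.2 : ℕ) ≤ k
  · refine Ideal.pow_le_pow_right ?_ h5
    omega
  · simp [c, hik]

lemma noeth_complete (I : Ideal A) [IsNoetherianRing A]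
    [hc : IsAdicComplete (I.map (algebraMap A B)) B]
    (hd : ∀ b : B, ∃ a : A, b - algebraMap A B a ∈ I.map (algebraMap A B)) :
    IsNoetherianRing B := by
  classical
  rw [isNoetherianRing_iff_ideal_fg]
  intro J
  obtain ⟨ι, _, g, d, D, hdD, hgJ, hstep⟩ := noeth_step I J hd
  set K := I.map (algebraMap A B) with hK
  suffices h : J = Ideal.span (Set.range g) by
    rw [h]; exact ⟨Finset.univ.image g, by simp⟩
  apply le_antisymm _ (by rw [Ideal.span_le]; rintro _ ⟨i, rfl⟩; exact hgJ i)
  intro j hj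
  choose! c hc1 hc2 using hstep
  let s : ℕ → B := fun k => Nat.rec j (fun k y => y - ∑ i, c k y i * g i) k
  have hs0 : s 0 = j := rfl
  have hs1 : ∀ k, s (k + 1) = s k - ∑ i, c k (s k) i * g i := fun k => rfl
  have hs : ∀ k, s k ∈ J ∧ s k ∈ K ^ k := by
    intro k
    induction k with
    | zero => exact ⟨hj, by simp⟩
    | succ k ih =>
      rw [hs1]
      exact ⟨sub_mem ih.1 (sum_mem fun i _ => Ideal.mul_mem_left _ _ (hgJ i)),
        hc2 k _ ih.1 ih.2⟩
  let e : ℕ → ι → B := fun n i => ∑ k ∈ Finset.range (n + D), c k (s k) i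
  have hsum : ∀ N, s N = j - ∑ i, (∑ k ∈ Finset.range N, c k (s k) i) * g i := by
    intro N
    induction N with
    | zero => simp [hs0]
    | succ N ih =>
      rw [hs1]
      simp only [Finset.sum_range_succ, add_mul, Finset.sum_add_distrib]
      linear_combination ih
  have hlim : ∀ i, ∃ L, ∀ n, e n i - L ∈ K ^ n := by
    intro i
    have := IsPrecomplete.prec (I := K) (M := B) inferInstance (f := fun n => e n i) (by
      intro m n hmn
      rw [SModEq.sub_mem, smul_eq_mul, Ideal.mul_top]
      simp only [e]
      have : ∑ k ∈ Finset.range (m + D), c k (s k) i - ∑ k ∈ Finset.range (n + D), c k (s k) i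
          = - ∑ k ∈ Finset.Ico (m + D) (n + D), c k (s k) i := by
        rw [Finset.sum_Ico_eq_sub _ (by omega)]; ring
      rw [this]
      refine neg_mem (sum_mem fun k hk => ?_)
      rw [Finset.mem_Ico] at hk
      refine Ideal.pow_le_pow_right ?_ (hc1 k _ (hs k).1 (hs k).2 i)
      have := hdD i
      omega)
    obtain ⟨L, hL⟩ := this
    refine ⟨L, fun n => ?_⟩
    have := hL n
    rwa [SModEq.sub_mem, smul_eq_mul, Ideal.mul_top] at this
  choose L hL using hlim
  have hfin : j - ∑ i, L i * g i = 0 := by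
    apply IsHausdorff.haus (I := K) (M := B) inferInstance
    intro n
    rw [SModEq.zero, smul_eq_mul, Ideal.mul_top]
    have : j - ∑ i, L i * g i = s (n + D) + ∑ i, (e n i - L i) * g i := by
      rw [hsum]; simp only [sub_mul, Finset.sum_sub_distrib, e]; ring
    rw [this]
    exact add_mem (Ideal.pow_le_pow_right (by omega) (hs _).2)
      (sum_mem fun i _ => Ideal.mul_mem_right _ _ (hL i n))
  rw [sub_eq_zero.mp hfin]
  exact sum_mem fun i _ => Ideal.mul_mem_left _ _ (Ideal.subset_span ⟨i, rfl⟩)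

end noeth
end LCS
end

section
namespace LCS

section compl
variable (A : Type u) [CommRing A] [IsLocalRing A] [IsNoetherianRing A]

lemma comp_dense (b : AdicCompletion (maximalIdeal A) A) :
    ∃ a : A, b - algebraMap A _ a ∈
      (maximalIdeal A).map (algebraMap A (AdicCompletion (maximalIdeal A) A)) := by
  rw [← AdicCompletion.maximalIdeal_eq_map]
  obtain ⟨a, ha⟩ := Ideal.Quotient.mk_surjective (b.1 1)
  refine ⟨a, ?_⟩
  rw [AdicCompletion.mem_maximalIdeal_iff_eval_one_eq_zero]
  have : (b - algebraMap A (AdicCompletion (maximalIdeal A) A) a).1 1 =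
    b.1 1 - Ideal.Quotient.mk _ a := rfl
  rw [this, ha, sub_self]

lemma comp_noeth : IsNoetherianRing (AdicCompletion (maximalIdeal A) A) := by
  haveI : IsAdicComplete ((maximalIdeal A).map (algebraMap A (AdicCompletion (maximalIdeal A) A)))
    (AdicCompletion (maximalIdeal A) A) := by
    rw [← AdicCompletion.maximalIdeal_eq_map]; infer_instance
  exact noeth_complete (maximalIdeal A) (comp_dense A)

lemma comp_reg [IsRegularLocalRing A] : IsRegularLocalRing (AdicCompletion (maximalIdeal A) A) := by
  haveI := comp_noeth A
  apply IsRegularLocalRing.of_spanFinrank_maximalIdeal_le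
  rw [AdicCompletion.spanFinrank_maximalIdeal_eq, (isRegularLocalRing_iff A).mp inferInstance,
    ← IsLocalRing.maximalIdeal_height_eq_ringKrullDim, ← IsLocalRing.maximalIdeal_height_eq_ringKrullDim]
  haveI : (maximalIdeal (AdicCompletion (maximalIdeal A) A)).LiesOver (maximalIdeal A) :=
    ⟨(IsLocalRing.maximalIdeal_comap (algebraMap A (AdicCompletion (maximalIdeal A) A))).symm⟩
  rw [Ideal.height_eq_height_add_of_liesOver_of_hasGoingDown (maximalIdeal A)
    (maximalIdeal (AdicCompletion (maximalIdeal A) A))]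
  exact_mod_cast le_self_add

lemma comp_comap (k : ℕ) (x : A)
    (hx : algebraMap A (AdicCompletion (maximalIdeal A) A) x ∈
      (maximalIdeal (AdicCompletion (maximalIdeal A) A)) ^ k) : x ∈ maximalIdeal A ^ k := by
  rw [AdicCompletion.maximalIdeal_eq_map, ← Ideal.map_pow] at hx
  have h : (maximalIdeal A ^ k).map (algebraMap A (AdicCompletion (maximalIdeal A) A)) ≤
      RingHom.ker (AdicCompletion.evalₐ (maximalIdeal A) k) := by
    rw [Ideal.map_le_iff_le_comap]
    intro y hy
    rw [Ideal.mem_comap, RingHom.mem_ker, AlgHom.commutes]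
    exact Ideal.Quotient.eq_zero_iff_mem.mpr hy
  have h2 := h hx
  rw [RingHom.mem_ker, AlgHom.commutes] at h2
  exact Ideal.Quotient.eq_zero_iff_mem.mp h2

lemma comp_dense_pow (k : ℕ) (b : AdicCompletion (maximalIdeal A) A) :
    ∃ a : A, b - algebraMap A _ a ∈ (maximalIdeal (AdicCompletion (maximalIdeal A) A)) ^ k := by
  rw [AdicCompletion.maximalIdeal_eq_map]
  induction k with
  | zero => exact ⟨0, by simp⟩
  | succ k ih =>
    obtain ⟨a, ha⟩ := ih
    obtain ⟨c, -, hc⟩ := dense_pow (maximalIdeal A) (comp_dense A) k _ ha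
    exact ⟨a + c, by rw [map_add, ← sub_sub]; exact hc⟩

end compl
end LCS
end

section
namespace LCS

section chev
variable {A : Type u} [CommRing A] [IsLocalRing A] [IsNoetherianRing A]

lemma artinian_pow (k : ℕ) (hk : k ≠ 0) : IsArtinianRing (A ⧸ maximalIdeal A ^ k) := by
  have hle : maximalIdeal A ^ k ≤ maximalIdeal A := Ideal.pow_le_self hk
  have hne : maximalIdeal A ^ k ≠ ⊤ := fun h =>
    Ideal.IsPrime.ne_top' (top_le_iff.mp (h ▸ hle))
  have : Nontrivial (A ⧸ maximalIdeal A ^ k) := Ideal.Quotient.nontrivial_iff.mpr hne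
  have : IsLocalRing (A ⧸ maximalIdeal A ^ k) :=
    IsLocalRing.of_surjective' (Ideal.Quotient.mk _) Ideal.Quotient.mk_surjective
  rw [isArtinianRing_iff_isNilpotent_maximalIdeal]
  refine ⟨k, ?_⟩
  rw [← map_max (Ideal.Quotient.mk (maximalIdeal A ^ k)) Ideal.Quotient.mk_surjective,
    ← Ideal.map_pow, Ideal.map_quotient_self]
  rfl

lemma stab (J : ℕ → Ideal A) (hJ : Antitone J) (k : ℕ) :
    ∃ S, ∀ s, S ≤ s → J s ⊔ maximalIdeal A ^ k = J S ⊔ maximalIdeal A ^ k := by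
  by_cases hk : k = 0
  · exact ⟨0, fun s _ => by simp [hk]⟩
  have := artinian_pow (A := A) k hk
  let f : ℕ →o (Submodule (A ⧸ maximalIdeal A ^ k) (A ⧸ maximalIdeal A ^ k))ᵒᵈ :=
    ⟨fun s => OrderDual.toDual ((J s).map (Ideal.Quotient.mk _)),
      fun a b h => Ideal.map_mono (hJ h)⟩
  obtain ⟨S, hS⟩ := IsArtinian.monotone_stabilizes f
  refine ⟨S, fun s hs => ?_⟩
  have h1 : (J S).map (Ideal.Quotient.mk (maximalIdeal A ^ k)) =
    (J s).map (Ideal.Quotient.mk (maximalIdeal A ^ k)) := hS s hs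
  have h2 := congrArg (Ideal.comap (Ideal.Quotient.mk (maximalIdeal A ^ k))) h1
  rw [Ideal.comap_map_of_surjective _ Ideal.Quotient.mk_surjective,
    Ideal.comap_map_of_surjective _ Ideal.Quotient.mk_surjective, ← RingHom.ker_eq_comap_bot,
    Ideal.mk_ker] at h2
  exact h2.symm

lemma chev_limit (J : ℕ → Ideal A) (hJ : Antitone J) (N : ℕ)
    (hN : ∀ s, ¬ J s ≤ maximalIdeal A ^ N) :
    ∃ b : AdicCompletion (maximalIdeal A) A, b ≠ 0 ∧ ∀ s k, ∃ x ∈ J s,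
      b - algebraMap A _ x ∈ (maximalIdeal (AdicCompletion (maximalIdeal A) A)) ^ k := by
  choose S hS using stab J hJ
  let W : ℕ → Ideal A := fun k => ⨅ s, J s ⊔ maximalIdeal A ^ k
  have hW : ∀ k s, S k ≤ s → J s ≤ W k := by
    intro k s hs
    refine le_iInf fun r => ?_
    by_cases h : s ≤ r
    · refine le_trans le_sup_left ((hS k s hs).trans (hS k r (hs.trans h)).symm).le
    · exact (hJ (le_of_not_ge h)).trans le_sup_left
  have hstep : ∀ i (x : W (N + i)), ∃ y : W (N + (i + 1)), y.1 - x.1 ∈ maximalIdeal A ^ (N + i) := by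
    rintro i ⟨x, hx⟩
    have h1 := (Submodule.mem_iInf _).mp hx (S (N + (i + 1)))
    obtain ⟨y, hy, z, hz, rfl⟩ := Submodule.mem_sup.mp h1
    refine ⟨⟨y, hW _ _ le_rfl hy⟩, ?_⟩
    simpa using hz
  choose g hg using hstep
  obtain ⟨a0, ha0, ha0'⟩ := Set.not_subset.mp (hN (S N))
  let a : (i : ℕ) → W (N + i) := fun i => Nat.rec ⟨a0, hW _ _ le_rfl ha0⟩ (fun i x => g i x) i
  have ha : ∀ i, (a (i + 1)).1 - (a i).1 ∈ maximalIdeal A ^ (N + i) := fun i => hg i (a i)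
  have ha2 : ∀ i j, i ≤ j → (a j).1 - (a i).1 ∈ maximalIdeal A ^ (N + i) := by
    intro i j hij
    induction j, hij using Nat.le_induction with
    | base => simp
    | succ j hj ih =>
      have : (a (j + 1)).1 - (a i).1 = ((a (j + 1)).1 - (a j).1) + ((a j).1 - (a i).1) := by ring
      rw [this]
      exact add_mem (Ideal.pow_le_pow_right (by omega) (ha j)) ih
  have hmap : ∀ k x, x ∈ maximalIdeal A ^ k →
      algebraMap A (AdicCompletion (maximalIdeal A) A) x ∈
        (maximalIdeal (AdicCompletion (maximalIdeal A) A)) ^ k := by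
    intro k x hx
    rw [AdicCompletion.maximalIdeal_eq_map, ← Ideal.map_pow]
    exact Ideal.mem_map_of_mem _ hx
  obtain ⟨b, hb⟩ := IsPrecomplete.prec (I := maximalIdeal (AdicCompletion (maximalIdeal A) A))
    (M := AdicCompletion (maximalIdeal A) A) inferInstance
    (f := fun n => algebraMap A (AdicCompletion (maximalIdeal A) A) (a n).1) (by
      intro m n hmn
      rw [SModEq.sub_mem, smul_eq_mul, Ideal.mul_top, ← map_sub, ← neg_sub, map_neg]
      exact neg_mem (hmap _ _ (Ideal.pow_le_pow_right (by omega) (ha2 m n hmn))))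
  have hb' : ∀ k, algebraMap A (AdicCompletion (maximalIdeal A) A) (a k).1 - b ∈
      (maximalIdeal (AdicCompletion (maximalIdeal A) A)) ^ k := by
    intro k
    have := hb k
    rwa [SModEq.sub_mem, smul_eq_mul, Ideal.mul_top] at this
  refine ⟨b, ?_, ?_⟩
  · rintro rfl
    apply ha0'
    have h1 := hb' N
    rw [sub_zero] at h1
    have h2 := comp_comap A N _ h1
    have h3 := ha2 0 N (Nat.zero_le _)
    have h4 := sub_mem h2 h3
    rw [sub_sub_cancel] at h4
    exact h4
  · intro s k
    have h1 := (Submodule.mem_iInf _).mp (a k).2 s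
    obtain ⟨y, hy, z, hz, he⟩ := Submodule.mem_sup.mp h1
    refine ⟨y, hy, ?_⟩
    have : b - algebraMap A _ y = algebraMap A (AdicCompletion (maximalIdeal A) A) z -
        (algebraMap A (AdicCompletion (maximalIdeal A) A) (a k).1 - b) := by
      rw [← he, map_add]; ring
    rw [this]
    exact sub_mem (hmap _ _ (Ideal.pow_le_pow_right (by omega) hz)) (hb' k)

/-- saturation -/
def sat (m J : Ideal A) : Ideal A where
  carrier := {x | ∃ k, ∀ y ∈ m ^ k, y * x ∈ J}
  add_mem' := by
    rintro a b ⟨k, hk⟩ ⟨l, hl⟩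
    refine ⟨max k l, fun y hy => ?_⟩
    rw [mul_add]
    exact add_mem (hk _ (Ideal.pow_le_pow_right (le_max_left _ _) hy))
      (hl _ (Ideal.pow_le_pow_right (le_max_right _ _) hy))
  zero_mem' := ⟨0, fun y _ => by simp⟩
  smul_mem' := by
    rintro c x ⟨k, hk⟩
    refine ⟨k, fun y hy => ?_⟩
    have : y * (c • x) = c * (y * x) := by rw [smul_eq_mul]; ring
    rw [this]; exact Ideal.mul_mem_left _ _ (hk y hy)

lemma sat_mono (m : Ideal A) {J K : Ideal A} (h : J ≤ K) : sat m J ≤ sat m K := by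
  rintro x ⟨k, hk⟩
  exact ⟨k, fun y hy => h (hk y hy)⟩

lemma sat_fin (m J : Ideal A) : ∃ k, m ^ k * sat m J ≤ J := by
  obtain ⟨T, hT⟩ : (sat m J).FG := IsNoetherian.noetherian _
  have h : ∀ x : A, ∃ k, x ∈ T → ∀ y ∈ m ^ k, y * x ∈ J := by
    intro x
    by_cases hx : x ∈ T
    · obtain ⟨k, hk⟩ : x ∈ sat m J := by rw [← hT]; exact Ideal.subset_span hx
      exact ⟨k, fun _ => hk⟩
    · exact ⟨0, fun h => absurd h hx⟩
  choose k hk using h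
  refine ⟨T.sup k, ?_⟩
  rw [Ideal.mul_le]
  intro r hr s hs
  rw [← hT] at hs
  induction hs using Submodule.span_induction with
  | mem x hx => exact hk x hx r (Ideal.pow_le_pow_right (Finset.le_sup hx) hr)
  | zero => simp
  | add x y _ _ h1 h2 => rw [mul_add]; exact add_mem h1 h2
  | smul c x _ h1 =>
    have : r * (c • x) = c * (r * x) := by rw [smul_eq_mul]; ring
    rw [this]; exact Ideal.mul_mem_left _ _ h1

lemma sat_inf (m J : Ideal A) : ∃ N, sat m J ⊓ m ^ N ≤ J := by
  obtain ⟨k, hk⟩ := sat_fin m J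
  obtain ⟨c, hc⟩ := Ideal.exists_pow_inf_eq_pow_smul m (sat m J : Submodule A A)
  refine ⟨c + k, ?_⟩
  have h := hc (c + k) (by omega)
  rintro x ⟨hx1, hx2⟩
  have h1 : x ∈ (m ^ (c + k) • ⊤ ⊓ sat m J : Submodule A A) :=
    ⟨by rw [smul_eq_mul, Ideal.mul_top]; exact hx2, hx1⟩
  rw [h] at h1
  have h2 : x ∈ m ^ (c + k - c) * sat m J := Ideal.mul_mono_right inf_le_right h1
  rw [Nat.add_sub_cancel_left] at h2
  exact hk h2

lemma closed_ideal (K : Ideal A) (b : A) (h : ∀ k, ∃ x ∈ K, b - x ∈ maximalIdeal A ^ k) : b ∈ K := by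
  have h0 := Ideal.iInf_pow_smul_eq_bot_of_isLocalRing (R := A) (M := A ⧸ K) (maximalIdeal A)
    Ideal.IsPrime.ne_top'
  rw [← Ideal.Quotient.eq_zero_iff_mem, ← Submodule.mem_bot A, ← h0, Submodule.mem_iInf]
  intro k
  obtain ⟨x, hx, hx'⟩ := h k
  have : Ideal.Quotient.mk K b = (b - x) • (1 : A ⧸ K) := by
    rw [Algebra.smul_def, mul_one, Ideal.Quotient.algebraMap_eq, map_sub,
      Ideal.Quotient.eq_zero_iff_mem.mpr hx, sub_zero]
  rw [this]
  exact Submodule.smul_mem_smul hx' trivial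

lemma exists_Q (I q : Ideal A) [q.IsPrime] (hIq : I ≤ q) (hq : q ≠ maximalIdeal A) :
    ∃ Q : Ideal (AdicCompletion (maximalIdeal A) A), Q.IsPrime ∧
      I.map (algebraMap A (AdicCompletion (maximalIdeal A) A)) ≤ Q ∧
      Q ≠ maximalIdeal (AdicCompletion (maximalIdeal A) A) := by
  have := comp_noeth A
  by_contra! hcon
  apply hq
  have hrad : maximalIdeal (AdicCompletion (maximalIdeal A) A) ≤
      (I.map (algebraMap A (AdicCompletion (maximalIdeal A) A))).radical := by
    rw [Ideal.radical_eq_sInf]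
    refine le_sInf ?_
    rintro Q ⟨h1, h2⟩
    exact (hcon Q h2 h1).ge
  obtain ⟨k, hk⟩ := Ideal.exists_pow_le_of_le_radical_of_fg hrad
    ((isNoetherianRing_iff_ideal_fg _).mp inferInstance _)
  have : Module.FaithfullyFlat A (AdicCompletion (maximalIdeal A) A) :=
    Module.FaithfullyFlat.of_flat_of_isLocalHom
  have h1 : maximalIdeal A ^ k ≤ I := by
    intro y hy
    rw [← Ideal.comap_map_eq_self_of_faithfullyFlat (B := AdicCompletion (maximalIdeal A) A) I]
    apply hk
    rw [AdicCompletion.maximalIdeal_eq_map, ← Ideal.map_pow]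
    exact Ideal.mem_map_of_mem _ hy
  have h2 : maximalIdeal A ≤ q := Ideal.IsPrime.le_of_pow_le (h1.trans hIq)
  exact (le_antisymm (le_maximalIdeal Ideal.IsPrime.ne_top') h2)

lemma krull_domain {B : Type u} [CommRing B] [IsDomain B] [IsNoetherianRing B] (Q : Ideal B)
    [Q.IsPrime] (b : B) (h : ∀ s : ℕ, ∃ u ∉ Q, u * b ∈ Q ^ s) : b = 0 := by
  apply IsLocalization.injective (Localization.AtPrime Q) Q.primeCompl_le_nonZeroDivisors
  rw [map_zero, ← Ideal.mem_bot, ← Ideal.iInf_pow_eq_bot_of_isLocalRing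
    (maximalIdeal (Localization.AtPrime Q)) Ideal.IsPrime.ne_top', Submodule.mem_iInf]
  intro s
  obtain ⟨v, hv, hvb⟩ := h s
  have h1 : IsUnit (algebraMap B (Localization.AtPrime Q) v) :=
    IsLocalization.map_units (M := Q.primeCompl) _ ⟨v, hv⟩
  rw [← Ideal.unit_mul_mem_iff_mem _ h1, ← map_mul, ← Localization.AtPrime.map_eq_maximalIdeal,
    ← Ideal.map_pow]
  exact Ideal.mem_map_of_mem _ hvb

lemma chevalley [IsRegularLocalRing A] (I q : Ideal A) [q.IsPrime] (hIq : I ≤ q)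
    (hq : q ≠ maximalIdeal A) (t : ℕ) :
    ∃ t', t ≤ t' ∧ sat (maximalIdeal A) (I ^ t') ≤ I ^ t := by
  obtain ⟨N, hN⟩ := sat_inf (maximalIdeal A) (I ^ t)
  have hanti : Antitone (fun s => sat (maximalIdeal A) (I ^ s)) :=
    fun a b h => sat_mono _ (Ideal.pow_le_pow_right h)
  by_cases hex : ∃ s, sat (maximalIdeal A) (I ^ s) ≤ maximalIdeal A ^ N
  · obtain ⟨s, hs⟩ := hex
    refine ⟨max s t, le_max_right _ _, le_trans (le_inf ?_ ?_) hN⟩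
    · exact hanti (le_max_right s t)
    · exact (hanti (le_max_left s t)).trans hs
  exfalso
  push Not at hex
  obtain ⟨b, hb0, hb⟩ := chev_limit _ hanti N hex
  have := comp_noeth A
  have := comp_reg A
  have := reg_isDomain (AdicCompletion (maximalIdeal A) A)
  obtain ⟨Q, hQp, hIQ, hQ⟩ := exists_Q I q hIq hq
  apply hb0
  obtain ⟨y, hy, hyQ⟩ : ∃ y ∈ maximalIdeal A,
      algebraMap A (AdicCompletion (maximalIdeal A) A) y ∉ Q := by
    by_contra! hcon
    apply hQ
    refine le_antisymm (le_maximalIdeal Ideal.IsPrime.ne_top') ?_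
    rw [AdicCompletion.maximalIdeal_eq_map, Ideal.map_le_iff_le_comap]
    exact hcon
  apply krull_domain Q b
  intro s
  have hb1 : b ∈ (sat (maximalIdeal A) (I ^ s)).map
      (algebraMap A (AdicCompletion (maximalIdeal A) A)) := by
    apply closed_ideal
    intro k
    obtain ⟨x, hx, hx'⟩ := hb s k
    exact ⟨_, Ideal.mem_map_of_mem _ hx, hx'⟩
  obtain ⟨k, hk⟩ := sat_fin (maximalIdeal A) (I ^ s)
  refine ⟨algebraMap A _ (y ^ k), ?_, ?_⟩
  · rw [map_pow]
    exact fun h => hyQ (hQp.mem_of_pow_mem _ h)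
  · have h1 := Ideal.mul_mem_mul (Ideal.mem_map_of_mem
      (algebraMap A (AdicCompletion (maximalIdeal A) A)) (Ideal.pow_mem_pow hy k)) hb1
    rw [← Ideal.map_mul] at h1
    have h2 := Ideal.map_mono hk h1
    rw [Ideal.map_pow] at h2
    exact Ideal.pow_right_mono hIQ s h2

end chev
end LCS
end

section
namespace LCS

section kill
open Abelian

lemma kill_zero {R : Type u} [CommRing R] [IsNoetherianRing R] (S : Submonoid R)
    (M : ModuleCat.{u} R) [Module.Finite R M]
    (h : Module.Projective (Localization S) (M.localizedModule S)) :
    ∃ s ∈ S, ∀ (N : ModuleCat.{u} R) (n : ℕ) (e : Ext M N (n + 1)), s • e = 0 := by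
  obtain ⟨F, _, _, _, _, f0, surjf⟩ := Module.exists_finite_presentation R M
  have := Module.finitePresentation_of_finite R M
  let fM := M.localizedModuleMkLinearMap S
  let F' := ModuleCat.of R F
  let f : F' →ₗ[R] M := f0
  let fF := F'.localizedModuleMkLinearMap S
  have : IsLocalizedModule S fF := ModuleCat.localizedModule_isLocalizedModule F' S
  have : IsLocalizedModule S fM := ModuleCat.localizedModule_isLocalizedModule M S
  let f' : F'.localizedModule S →ₗ[Localization S] M.localizedModule S :=
    IsLocalizedModule.mapExtendScalars S fF fM (Localization S) f
  have hf' : Function.Surjective f' := IsLocalizedModule.map_surjective S fF fM f surjf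
  obtain ⟨g, hg⟩ := Module.projective_lifting_property f' LinearMap.id hf'
  obtain ⟨τ, s0, hτ⟩ := Module.FinitePresentation.exists_lift_of_isLocalizedModule S fF
    ((g.restrictScalars R) ∘ₗ fM)
  have h1 : fM.comp (f ∘ₗ τ) = fM.comp ((s0 : R) • LinearMap.id) := by
    ext x
    have e1 : fM (f (τ x)) = f' (fF (τ x)) := by
      exact (LinearMap.congr_fun (IsLocalizedModule.map_comp S fF fM f) (τ x)).symm
    have e2 : fF (τ x) = s0 • g (fM x) := LinearMap.congr_fun hτ x
    have e3 : f' (s0 • g (fM x)) = s0 • f' (g (fM x)) :=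
      (f'.restrictScalars R).map_smul (s0 : R) _
    have e4 : f' (g (fM x)) = fM x := LinearMap.congr_fun hg (fM x)
    change fM (f (τ x)) = fM ((s0 : R) • x)
    rw [e1, e2, e3, e4, map_smul]
    rfl
  obtain ⟨s1, hs1⟩ := Module.Finite.exists_smul_of_comp_eq_of_isLocalizedModule S fM _ _ h1
  refine ⟨s1 * s0, S.mul_mem s1.2 s0.2, fun N n e => ?_⟩
  have h2 : ((s1 : R) * (s0 : R)) • 𝟙 M = ModuleCat.ofHom ((s1 : R) • τ) ≫ 
      (ModuleCat.ofHom f : F' ⟶ M) := by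
    ext x
    have := LinearMap.congr_fun hs1 x
    change ((s1 : R) * (s0 : R)) • x = f ((s1 : R) • τ x)
    rw [map_smul, mul_smul]
    exact this.symm
  have h3 : ((s1 : R) * (s0 : R)) • e = (Ext.mk₀ (((s1 : R) * (s0 : R)) • 𝟙 M)).comp e (zero_add _) := by
    rw [Ext.mk₀_smul, Ext.smul_comp, Ext.mk₀_id_comp]
  have : Projective F' := (IsProjective.iff_projective (R := R) F).mp inferInstance
  rw [h3, h2, ← Ext.mk₀_comp_mk₀_assoc, Ext.eq_zero_of_projective ((Ext.mk₀ _).comp e _),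
    Ext.comp_zero]

lemma kill {R : Type u} [CommRing R] [IsNoetherianRing R] (S : Submonoid R) (n : ℕ) :
    ∀ (M : ModuleCat.{u} R) [Module.Finite R M] 
    (_ : HasProjectiveDimensionLE (M.localizedModule S) n),
    ∃ s ∈ S, ∀ (N : ModuleCat.{u} R) (k : ℕ) (_ : n ≤ k) (e : Ext M N (k + 1)), s • e = 0 := by
  induction n with
  | zero =>
    intro M _ h
    obtain ⟨s, hs, h'⟩ := kill_zero S M (by
      rwa [IsProjective.iff_projective, projective_iff_hasProjectiveDimensionLE_zero])
    exact ⟨s, hs, fun N k _ e => h' N k e⟩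
  | succ n ih =>
    intro M _ h
    obtain ⟨F, _, _, _, _, f, surjf⟩ := Module.exists_finite_presentation R M
    have hse := LinearMap.shortExact_shortComplexKer surjf
    have hp : Projective (ModuleCat.of R F) := (IsProjective.iff_projective (R := R) F).mp inferInstance
    have hse' := hse.map_of_exact (ModuleCat.localizedModuleFunctor S)
    have : Projective (f.shortComplexKer.map (ModuleCat.localizedModuleFunctor S)).X₂ :=
      (ModuleCat.localizedModuleFunctor.{u} S).projective_obj (ModuleCat.of R F)
    obtain ⟨s, hs, hk⟩ := ih (ModuleCat.of R (LinearMap.ker f))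
      ((hse'.hasProjectiveDimensionLT_X₃_iff n ‹_›).mp h)
    refine ⟨s, hs, fun N k hnk e => ?_⟩
    obtain ⟨k, rfl⟩ : ∃ l, k = l + 1 := ⟨k - 1, by omega⟩
    obtain ⟨e', rfl⟩ := precomp_extClass_surjective_of_projective_X₂ N hse (k + 1) e
    change s • (hse.extClass.comp e' (add_comm 1 (k + 1))) = 0
    rw [← Ext.comp_smul, hk N k (by omega) e', Ext.comp_zero]

/-- if `ht p ≤ j` then `Ext^{k+1}(M,N)` is killed outside `p` for `k ≥ j`. -/
lemma kill_prime {R : Type u} [CommRing R] [IsRegularLocalRing R] (p : Ideal R) [p.IsPrime]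
    (j : ℕ) (hj : p.height ≤ j) (M : ModuleCat.{u} R) [Module.Finite R M] :
    ∃ s ∉ p, ∀ (N : ModuleCat.{u} R) (k : ℕ) (_ : j ≤ k) (e : Ext M N (k + 1)), s • e = 0 := by
  have := reg_localization R p
  obtain ⟨h, hh⟩ := ENat.ne_top_iff_exists.mp (Ideal.height_ne_top (I := p) Ideal.IsPrime.ne_top')
  have hd : ringKrullDim (Localization.AtPrime p) = (h : ℕ) := by
    rw [IsLocalization.AtPrime.ringKrullDim_eq_height p (Localization.AtPrime p), ← hh]; rfl
  have hhj : h ≤ j := by rw [← hh] at hj; exact_mod_cast hj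
  have : Module.Finite (Localization.AtPrime p) (M.localizedModule p.primeCompl) :=
    Module.Finite.of_isLocalizedModule p.primeCompl (M.localizedModuleMkLinearMap p.primeCompl)
  exact kill p.primeCompl j M (PD_mono hhj (PD_reg h (Localization.AtPrime p) hd
    (M.localizedModule p.primeCompl)))

end kill
end LCS
end

section
namespace LCS

section core
open Abelian

lemma exists_regular {R : Type u} [CommRing R] [IsNoetherianRing R] (p J : Ideal R)
    (h : ∀ x, (∀ y ∈ p, y * x ∈ J) → x ∈ J) : ∃ y ∈ p, IsSMulRegular (R ⧸ J) y := by
  by_contra! hcon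
  have h1 : (p : Set R) ⊆ ⋃ P ∈ associatedPrimes R (R ⧸ J), (P : Set R) := by
    intro y hy
    rw [biUnion_associatedPrimes_eq_zero_divisors]
    have := hcon y hy
    rw [isSMulRegular_iff_right_eq_zero_of_smul] at this
    push Not at this
    obtain ⟨x, hx1, hx2⟩ := this
    exact ⟨x, hx2, hx1⟩
  rw [Ideal.subset_union_prime_finite (associatedPrimes.finite R (R ⧸ J)) (f := fun P => P) ⊥ ⊥
    (fun P hP _ _ => IsAssociatedPrime.isPrime hP)] at h1
  obtain ⟨P, hP, hpP⟩ := h1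
  rw [AssociatedPrimes.mem_iff, isAssociatedPrime_iff] at hP
  obtain ⟨hPp, x, rfl⟩ := hP
  obtain ⟨x, rfl⟩ := Ideal.Quotient.mk_surjective x
  apply hPp.ne_top
  have hx : x ∈ J := h x fun y hy => by
    have h2 := hpP hy
    rw [Submodule.mem_colon_singleton, Submodule.mem_bot, Algebra.smul_def,
      Ideal.Quotient.algebraMap_eq, ← map_mul] at h2
    exact Ideal.Quotient.eq_zero_iff_mem.mp h2
  rw [Ideal.Quotient.eq_zero_iff_mem.mpr hx]
  simp

lemma alg_core {R : Type u} [CommRing R] [IsRegularLocalRing R] (p q I : Ideal R) [p.IsPrime]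
    [q.IsPrime] (hIq : I ≤ q) (hqp : q < p) (t : ℕ) :
    ∃ t', t ≤ t' ∧ ∃ J : Ideal R, I ^ t' ≤ J ∧ (∃ s ∉ p, ∀ r ∈ J, s * r ∈ I ^ t) ∧
      ∃ y ∈ p, IsSMulRegular (R ⧸ J) y := by
  have := reg_localization R p
  let A := Localization.AtPrime p
  have hdisj : Disjoint (p.primeCompl : Set R) q :=
    Set.disjoint_left.mpr fun x hx hx' => hx (hqp.le hx')
  have hq' : (q.map (algebraMap R A)).IsPrime :=
    IsLocalization.isPrime_of_isPrime_disjoint p.primeCompl A q inferInstance hdisj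
  have hqm : q.map (algebraMap R A) ≠ maximalIdeal A := by
    intro h
    have h1 := congrArg (Ideal.under R) h
    rw [IsLocalization.comap_map_of_isPrime_disjoint p.primeCompl A inferInstance hdisj,
      Localization.AtPrime.under_maximalIdeal] at h1
    exact hqp.ne h1
  obtain ⟨t', htt, ht'⟩ := chevalley (I.map (algebraMap R A)) (q.map (algebraMap R A))
    (Ideal.map_mono hIq) hqm t
  let J := (sat (maximalIdeal A) ((I.map (algebraMap R A)) ^ t')).comap (algebraMap R A)
  refine ⟨t', htt, J, ?_, ?_, ?_⟩
  · intro x hx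
    refine ⟨0, fun y _ => Ideal.mul_mem_left _ _ ?_⟩
    rw [← Ideal.map_pow]
    exact Ideal.mem_map_of_mem _ hx
  · obtain ⟨T, hT⟩ : J.FG := IsNoetherian.noetherian _
    have h : ∀ x : R, ∃ s ∉ p, x ∈ T → s * x ∈ I ^ t := by
      intro x
      by_cases hx : x ∈ T
      · have hxJ : x ∈ J := by rw [← hT]; exact Ideal.subset_span hx
        have h1 := ht' hxJ
        rw [← Ideal.map_pow, IsLocalization.algebraMap_mem_map_algebraMap_iff p.primeCompl] at h1
        obtain ⟨s, hs, hs'⟩ := h1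
        exact ⟨s, hs, fun _ => hs'⟩
      · exact ⟨1, p.primeCompl.one_mem, fun h => absurd h hx⟩
    choose s hs hs' using h
    refine ⟨∏ x ∈ T, s x, p.primeCompl.prod_mem fun x _ => hs x, fun r hr => ?_⟩
    rw [← hT] at hr
    induction hr using Submodule.span_induction with
    | mem x hx =>
      obtain ⟨c, hc⟩ := Finset.dvd_prod_of_mem s hx
      rw [hc, mul_comm (s x) c, mul_assoc]
      exact Ideal.mul_mem_left _ _ (hs' x hx)
    | zero => simp
    | add x y _ _ h1 h2 => rw [mul_add]; exact add_mem h1 h2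
    | smul c x _ h1 =>
      rw [smul_eq_mul, mul_left_comm]
      exact Ideal.mul_mem_left _ _ h1
  · apply exists_regular
    intro x hx
    obtain ⟨k, hk⟩ := sat_fin (maximalIdeal A) ((I.map (algebraMap R A)) ^ t')
    refine ⟨k + 1, fun y hy => ?_⟩
    have h1 : ∀ y ∈ maximalIdeal A, y * algebraMap R A x ∈
        sat (maximalIdeal A) ((I.map (algebraMap R A)) ^ t') := by
      intro y hy
      rw [← Localization.AtPrime.map_eq_maximalIdeal] at hy
      induction hy using Submodule.span_induction with
      | mem z hz =>
        obtain ⟨z, hz, rfl⟩ := hz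
        rw [← map_mul]
        exact hx z hz
      | zero => simp
      | add a b _ _ h1 h2 => rw [add_mul]; exact add_mem h1 h2
      | smul c a _ h1 => rw [smul_eq_mul, mul_assoc]; exact Ideal.mul_mem_left _ _ h1
    rw [pow_succ] at hy
    refine Submodule.mul_induction_on hy (fun a ha b hb => ?_) (fun a b h1 h2 => ?_)
    · rw [mul_assoc]
      exact hk (Ideal.mul_mem_mul ha (h1 b hb))
    · rw [add_mul]; exact add_mem h1 h2

lemma nak {R : Type u} [CommRing R] (p : Ideal R) [p.IsPrime] (E : Type u)
    [AddCommGroup E] [Module R E] [Module.Finite R E] (s : R) (hs : s ∉ p) (y : R) (hy : y ∈ p)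
    (h : ∀ e : E, ∃ e' : E, s • e = y • e') : ∃ r ∉ p, ∀ e : E, r • e = 0 := by
  have h1 : (⊤ : Submodule (Localization.AtPrime p) (LocalizedModule p.primeCompl E)) = ⊥ := by
    apply Submodule.eq_bot_of_le_smul_of_le_jacobson_bot (maximalIdeal (Localization.AtPrime p)) _
      Module.Finite.fg_top _ (maximalIdeal_le_jacobson _)
    intro z _
    induction z using LocalizedModule.induction_on with
    | _ e r =>
      obtain ⟨e', he'⟩ := h e
      have h2 : LocalizedModule.mk e r = algebraMap R (Localization.AtPrime p) y •
          LocalizedModule.mk e' (⟨s, hs⟩ * r) := by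
        rw [algebraMap_smul, LocalizedModule.smul'_mk, ← he']
        rw [LocalizedModule.mk_eq]
        refine ⟨1, ?_⟩
        rw [one_smul, one_smul, Submonoid.smul_def, Submonoid.smul_def, Submonoid.coe_mul, smul_smul,
          mul_comm]
      rw [h2]
      refine Submodule.smul_mem_smul ?_ trivial
      rw [← Localization.AtPrime.map_eq_maximalIdeal]
      exact Ideal.mem_map_of_mem _ hy
  have h2 : (⟨p, inferInstance⟩ : PrimeSpectrum R) ∉ Module.support R E := by
    rw [Module.notMem_support_iff]
    exact (Submodule.subsingleton_iff (Localization.AtPrime p)).mp (subsingleton_of_bot_eq_top h1.symm)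
  rw [Module.support_eq_zeroLocus, PrimeSpectrum.mem_zeroLocus, Set.not_subset] at h2
  obtain ⟨r, hr, hr'⟩ := h2
  exact ⟨r, hr', fun e => Module.mem_annihilator.mp hr e⟩

lemma ext_kill {R : Type u} [CommRing R] [IsRegularLocalRing R] (p : Ideal R) [p.IsPrime]
    (j : ℕ) (hj : p.height ≤ j) (M N : ModuleCat.{u} R) [Module.Finite R M] [Module.Finite R N]
    (y : R) (hy : y ∈ p) (hreg : IsSMulRegular M y) :
    ∃ r ∉ p, ∀ e : Ext M N j, r • e = 0 := by
  have hS := hreg.smulShortComplex_shortExact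
  have : Module.Finite R (M.smulShortComplex y).X₃ :=
    inferInstanceAs (Module.Finite R (QuotSMulTop y M))
  obtain ⟨s, hs, hk⟩ := kill_prime p j hj (M.smulShortComplex y).X₃
  apply nak p (Ext M N j) s hs y hy
  intro e
  let e' : Ext (M.smulShortComplex y).X₁ N j := e
  have h1 : hS.extClass.comp (s • e') (add_comm 1 j) = 0 :=
    (Ext.comp_smul _ _ _ _).trans (hk N j le_rfl _)
  obtain ⟨x, hx⟩ := Ext.contravariant_sequence_exact₁ hS N (s • e') (add_comm 1 j) h1
  refine ⟨x, ?_⟩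
  have h2 : ∀ x : Ext M N j, (Ext.mk₀ (y • 𝟙 M)).comp x (zero_add _) = y • x := fun x => by
    rw [Ext.mk₀_smul, Ext.smul_comp, Ext.mk₀_id_comp]
  exact hx.symm.trans (h2 x)

/-- transition map -/
def tr {R : Type u} [CommRing R] (I : Ideal R) {t t' : ℕ} (h : t ≤ t') :
    ModuleCat.of R (R ⧸ I ^ t') ⟶ ModuleCat.of R (R ⧸ I ^ t) :=
  ModuleCat.ofHom (Submodule.mapQ _ _ LinearMap.id (Ideal.pow_le_pow_right h))

lemma core_eq {R : Type u} [CommRing R] [IsRegularLocalRing R] (p q I : Ideal R) [p.IsPrime]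
    [q.IsPrime] (hIq : I ≤ q) (hqp : q < p) (j : ℕ) (hj : p.height ≤ j) (N : ModuleCat.{u} R)
    [Module.Finite R N] (t : ℕ) :
    ∃ t', ∃ h : t ≤ t', ∃ r ∉ p, ∀ e : Ext (ModuleCat.of R (R ⧸ I ^ t)) N j,
      (Ext.mk₀ (r • tr I h)).comp e (zero_add _) = 0 := by
  obtain ⟨t', htt, J, hJ, ⟨s, hs, hsJ⟩, y, hy, hreg⟩ := alg_core p q I hIq hqp t
  obtain ⟨r, hr, hk⟩ := ext_kill p j hj (ModuleCat.of R (R ⧸ J)) N y hy hreg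
  refine ⟨t', htt, r * s, p.primeCompl.mul_mem hr hs, fun e => ?_⟩
  let α : ModuleCat.of R (R ⧸ I ^ t') ⟶ ModuleCat.of R (R ⧸ J) :=
    ModuleCat.ofHom (Submodule.mapQ _ _ LinearMap.id hJ)
  let β : ModuleCat.of R (R ⧸ J) ⟶ ModuleCat.of R (R ⧸ I ^ t) :=
    ModuleCat.ofHom (Submodule.mapQ _ _ (LinearMap.lsmul R R s) (fun x hx => hsJ x hx))
  have h1 : (r * s) • tr I htt = r • (α ≫ β) := by
    rw [mul_smul]
    congr 1
    apply ModuleCat.hom_ext; apply LinearMap.ext; intro x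
    obtain ⟨x, rfl⟩ := Submodule.mkQ_surjective _ x
    rfl
  rw [h1, Ext.mk₀_smul, Ext.smul_comp, ← Ext.mk₀_comp_mk₀_assoc, ← Ext.comp_smul, hk, Ext.comp_zero]

lemma core_lt {R : Type u} [CommRing R] [IsRegularLocalRing R] (p I : Ideal R) [p.IsPrime]
    (j : ℕ) (hj : p.height < j) (N : ModuleCat.{u} R) (t : ℕ) :
    ∃ t', ∃ h : t ≤ t', ∃ r ∉ p, ∀ e : Ext (ModuleCat.of R (R ⧸ I ^ t)) N j,
      (Ext.mk₀ (r • tr I h)).comp e (zero_add _) = 0 := by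
  obtain ⟨k, rfl⟩ : ∃ k, j = k + 1 := by
    cases j with
    | zero => simp at hj
    | succ k => exact ⟨k, rfl⟩
  obtain ⟨r, hr, hk⟩ := kill_prime p k (ENat.lt_natCast_add_one_iff.mp (by exact_mod_cast hj))
    (ModuleCat.of R (R ⧸ I ^ t))
  refine ⟨t, le_rfl, r, hr, fun e => ?_⟩
  rw [Ext.mk₀_smul, Ext.smul_comp, ← Ext.comp_smul, hk N k le_rfl, Ext.comp_zero]

lemma core_not_le {R : Type u} [CommRing R] (p I : Ideal R) [p.IsPrime] (hI : ¬ I ≤ p)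
    (j : ℕ) (N : ModuleCat.{u} R) (t : ℕ) :
    ∃ t', ∃ h : t ≤ t', ∃ r ∉ p, ∀ e : Ext (ModuleCat.of R (R ⧸ I ^ t)) N j,
      (Ext.mk₀ (r • tr I h)).comp e (zero_add _) = 0 := by
  obtain ⟨x, hx, hxp⟩ := Set.not_subset.mp hI
  refine ⟨t, le_rfl, x ^ t, p.primeCompl.pow_mem hxp t, fun e => ?_⟩
  have h1 : x ^ t • tr I (le_refl t) = 0 := by
    apply ModuleCat.hom_ext; apply LinearMap.ext; intro z
    obtain ⟨z, rfl⟩ := Submodule.mkQ_surjective _ z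
    have : x ^ t * z ∈ I ^ t := Ideal.mul_mem_right _ _ (Ideal.pow_mem_pow hx t)
    exact Ideal.Quotient.eq_zero_iff_mem.mpr this
  rw [h1, Ext.mk₀_zero, Ext.zero_comp]

end core
end LCS
end

section
namespace LCS

lemma sc_zero {R : Type u} [CommRing R] {S T : ShortComplex (ModuleCat.{u} R)} (θ : S ⟶ T) (r : R)
    (h : ∀ z : S.X₂, S.g z = 0 → ∃ w : T.X₁, T.f w = r • θ.τ₂ z) (x : S.homology) :
    r • (ShortComplex.homologyMap θ) x = 0 := by
  obtain ⟨x, rfl⟩ := (ModuleCat.epi_iff_surjective S.homologyπ).mp inferInstance x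
  have h1 : (ShortComplex.homologyMap θ) (S.homologyπ x) = T.homologyπ (ShortComplex.cyclesMap θ x) := by
    rw [← ConcreteCategory.comp_apply, ShortComplex.homologyπ_naturality, ConcreteCategory.comp_apply]
  have h0 : S.g (S.iCycles x) = 0 := by
    rw [← ConcreteCategory.comp_apply, ShortComplex.iCycles_g]; rfl
  obtain ⟨w, hw⟩ := h _ h0
  have h2 : r • ShortComplex.cyclesMap θ x = T.toCycles w := by
    apply (ModuleCat.mono_iff_injective T.iCycles).mp inferInstance
    rw [← ConcreteCategory.comp_apply T.toCycles, ShortComplex.toCycles_i, hw, map_smul,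
      ← ConcreteCategory.comp_apply (ShortComplex.cyclesMap θ), ShortComplex.cyclesMap_i,
      ConcreteCategory.comp_apply]
  rw [h1, ← map_smul, h2, ← ConcreteCategory.comp_apply, ShortComplex.toCycles_comp_homologyπ]
  rfl

lemma sc_zero_op {R : Type u} [CommRing R] {S T : ShortComplex (ModuleCat.{u} R)ᵒᵖ} (ψ : S ⟶ T)
    (r : R)
    (h : ∀ z : T.unop.X₂, T.unop.g z = 0 → ∃ w : S.unop.X₁, S.unop.f w = r • ψ.τ₂.unop z)
    (x : T.homology.unop) :
    r • (ShortComplex.homologyMap ψ).unop x = 0 := by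
  have h1 : ShortComplex.homologyMap ψ = S.unop.homologyOpIso.hom ≫
      (ShortComplex.homologyMap (ShortComplex.unopMap ψ)).op ≫ T.unop.homologyOpIso.inv := by
    rw [ShortComplex.homologyMap_op]
    simp only [Category.assoc, Iso.hom_inv_id, Iso.hom_inv_id_assoc, Category.comp_id]
    rfl
  rw [h1]
  change r • S.unop.homologyOpIso.hom.unop
    ((ShortComplex.homologyMap (ShortComplex.unopMap ψ)) (T.unop.homologyOpIso.inv.unop x)) = 0
  rw [← map_smul, sc_zero (ShortComplex.unopMap ψ) r h, map_zero]

lemma smul_app {R : Type u} [CommRing R] {A B : ModuleCat.{u} R} (g : A ⟶ B) (r : R) (y : A)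
    (h : r • y = 0) : r • g y = 0 := by
  rw [← map_smul, h, map_zero]

lemma hc_zero_op {R : Type u} [CommRing R] {K L : ChainComplex (ModuleCat.{u} R)ᵒᵖ ℕ} (ψ : K ⟶ L)
    (r : R) (k : ℕ)
    (h : ∀ z : (L.X (k+1)).unop, (L.d (k+2) (k+1)).unop z = 0 →
      ∃ w : (K.X k).unop, (K.d (k+1) k).unop w = r • (ψ.f (k+1)).unop z)
    (x : (L.homology (k+1)).unop) :
    r • (HomologicalComplex.homologyMap ψ (k+1)).unop x = 0 := by
  let η := HomologicalComplex.homologyFunctorIso' (ModuleCat.{u} R)ᵒᵖ (ComplexShape.down ℕ)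
    (k+2) (k+1) k (by simp) (by simp)
  have h1 : HomologicalComplex.homologyMap ψ (k+1) = η.hom.app K ≫ ShortComplex.homologyMap
      ((HomologicalComplex.shortComplexFunctor' (ModuleCat.{u} R)ᵒᵖ (ComplexShape.down ℕ)
        (k+2) (k+1) k).map ψ) ≫ η.inv.app L := by
    have := η.hom.naturality_assoc ψ (η.inv.app L)
    rw [Iso.hom_inv_id_app] at this
    rw [← Category.comp_id (HomologicalComplex.homologyMap ψ (k+1))]
    exact this
  rw [h1]
  change r • (η.hom.app K).unop ((ShortComplex.homologyMap
      ((HomologicalComplex.shortComplexFunctor' (ModuleCat.{u} R)ᵒᵖ (ComplexShape.down ℕ)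
        (k+2) (k+1) k).map ψ)).unop ((η.inv.app L).unop x)) = 0
  exact smul_app (η.hom.app K).unop r _ (sc_zero_op
    ((HomologicalComplex.shortComplexFunctor' (ModuleCat.{u} R)ᵒᵖ (ComplexShape.down ℕ)
        (k+2) (k+1) k).map ψ) r h _)

lemma bridge {R : Type u} [CommRing R] {X X' N : ModuleCat.{u} R} (f : X' ⟶ X) (r : R) (k : ℕ)
    (h : ∀ e : Abelian.Ext X N (k + 1), (Abelian.Ext.mk₀ (r • f)).comp e (zero_add _) = 0)
    (x : ((Ext R (ModuleCat.{u} R) (k + 1)).obj (Opposite.op X)).obj N) :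
    r • (((Ext R (ModuleCat.{u} R) (k + 1)).map f.op).app N) x = 0 := by
  let P := projectiveResolution X
  let P' := projectiveResolution X'
  let φ : P'.complex ⟶ P.complex := ProjectiveResolution.lift f P' P
  have hφ : φ ≫ P.π = P'.π ≫ (ChainComplex.single₀ _).map f := ProjectiveResolution.lift_commutes f P' P
  let Φ : ProjectiveResolution.Hom P' P f := ⟨φ, by
    rw [← HomologicalComplex.comp_f, hφ, HomologicalComplex.comp_f]⟩
  let F := ((linearYoneda R (ModuleCat.{u} R)).obj N).rightOp
  have key : ∀ z : P.complex.X (k+1) ⟶ N, P.complex.d (k+2) (k+1) ≫ z = 0 →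
      ∃ w : P'.complex.X k ⟶ N, P'.complex.d (k+1) k ≫ w = r • (φ.f (k+1) ≫ z) := by
    intro z hz
    have h1 := h (P.extMk z (k+2) rfl hz)
    rw [Abelian.Ext.mk₀_smul, Abelian.Ext.smul_comp] at h1
    have h2 := ProjectiveResolution.mk₀_comp_extMk z (k+2) rfl hz Φ
    rw [h2] at h1
    have h3 := P'.extMk_comp_mk₀ (Φ.hom.f (k+1) ≫ z) (k+2) rfl
      (by simp [← Φ.hom.comm_assoc, hz]) (r • 𝟙 N)
    rw [Abelian.Ext.mk₀_smul, Abelian.Ext.comp_smul, Abelian.Ext.comp_mk₀_id, h1] at h3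
    obtain ⟨w, hw⟩ := (P'.extMk_eq_zero_iff _ _ _ _ k rfl).mp h3.symm
    refine ⟨w, hw.trans ?_⟩
    rw [Linear.comp_smul, Category.comp_id]
  have h4 := F.leftDerived_map_eq (k+1) f φ hφ
  let ψ := (F.mapHomologicalComplex (ComplexShape.down ℕ)).map φ
  change r • ((F.leftDerived (k+1)).map f).unop x = 0
  rw [h4]
  change r • (P'.isoLeftDerivedObj F (k+1)).hom.unop
    ((HomologicalComplex.homologyMap ψ (k+1)).unop
      ((P.isoLeftDerivedObj F (k+1)).inv.unop x)) = 0
  exact smul_app (P'.isoLeftDerivedObj F (k+1)).hom.unop r _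
    (hc_zero_op ψ r k (fun z hz => key z hz) _)
end LCS
end

section
namespace LCS

lemma lc_kill {R : Type u} [CommRing R] (p I : Ideal R) [p.IsPrime] (k : ℕ) (N : ModuleCat.{u} R)
    (h : ∀ t : ℕ, ∃ t', ∃ h : t ≤ t', ∃ r ∉ p, ∀ e : Abelian.Ext (ModuleCat.of R (R ⧸ I ^ t)) N (k+1),
      (Abelian.Ext.mk₀ (r • tr I h)).comp e (zero_add _) = 0)
    (x : (localCohomology I (k+1)).obj N) : ∃ r ∉ p, r • x = 0 := by
  let G := localCohomology.diagram (localCohomology.idealPowersDiagram I) (k+1)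
  have hG : Limits.HasColimit G := localCohomology.hasColimitDiagram.{u, 0} _ _
  let hc := Limits.isColimitOfPreserves ((evaluation _ _).obj N) (Limits.colimit.isColimit G)
  have : Limits.PreservesFilteredColimitsOfSize.{0, 0} (forget (ModuleCat.{u} R)) :=
    Limits.preservesFilteredColimitsOfSize_of_univLE.{u, u, 0, 0} _
  obtain ⟨⟨⟨t⟩⟩, y, hy⟩ := Limits.Concrete.isColimit_exists_rep _ hc x
  obtain ⟨t', ht, r, hr, hk⟩ := h t
  refine ⟨r, hr, ?_⟩
  let a : Opposite.op (Opposite.op t) ⟶ Opposite.op (Opposite.op t') := (homOfLE ht).op.op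
  have h1 := bridge (N := N) (tr I ht) r k hk y
  have h2 : (G.map a).app N ≫ (Limits.colimit.ι G (Opposite.op (Opposite.op t'))).app N =
      (Limits.colimit.ι G (Opposite.op (Opposite.op t))).app N := by
    rw [← NatTrans.comp_app, Limits.colimit.w]
  have h3 := smul_app ((Limits.colimit.ι G (Opposite.op (Opposite.op t'))).app N) r _ h1
  have h4 : (Limits.colimit.ι G (Opposite.op (Opposite.op t'))).app N
      ((G.map a).app N y) = x := by
    refine Eq.trans ?_ hy
    exact congrArg (fun f => (ConcreteCategory.hom f) y) h2
  rw [← h4]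
  exact h3
end LCS
end

section
namespace LCS
lemma ht_dim {R : Type u} [CommRing R] [IsLocalRing R] (n : ℕ) (hdim : ringKrullDim R = (n : ℕ))
    (p : PrimeSpectrum R) : ∃ a b : ℕ, p.asIdeal.height = a ∧ Order.height p = a ∧
      ringKrullDim (R ⧸ p.asIdeal) = (b : ℕ) ∧ a + b ≤ n := by
  have h1 : ringKrullDim (R ⧸ p.asIdeal) = Order.coheight p := by
    rw [ringKrullDim_quotient, Order.coheight_eq_krullDim_Ici]
    congr 1
  have h2 : ((Order.height p + Order.coheight p : ℕ∞) : WithBot ℕ∞) ≤ ((n : ℕ∞) : WithBot ℕ∞) := by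
    refine le_trans ?_ hdim.le
    rw [ringKrullDim, Order.krullDim_eq_iSup_height_add_coheight_of_nonempty]
    exact WithBot.coe_le_coe.mpr (le_iSup (fun q : PrimeSpectrum R =>
      Order.height q + Order.coheight q) p)
  have h3 := WithBot.coe_le_coe.mp h2
  have ha : Order.height p ≠ ⊤ := ne_top_of_le_ne_top (ENat.coe_ne_top n) (le_self_add.trans h3)
  have hb : Order.coheight p ≠ ⊤ := ne_top_of_le_ne_top (ENat.coe_ne_top n) (le_add_self.trans h3)
  obtain ⟨a, ha⟩ := ENat.ne_top_iff_exists.mp ha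
  obtain ⟨b, hb⟩ := ENat.ne_top_iff_exists.mp hb
  refine ⟨a, b, by rw [PrimeSpectrum.height_eq_orderHeight, ha], ha.symm, by rw [h1, ← hb]; rfl, ?_⟩
  rw [← ha, ← hb] at h3
  exact_mod_cast h3
end LCS


end

/-- Let `(R, m)` be a regular local ring of dimension `n` and `I` an ideal such
that `R/I` is equidimensional of dimension `d ≥ 2`.  Fix `1 ≤ i ≤ d - 1`.  Then
every prime `p` in the support of the local cohomology module `H^{n-i}_I(R)`
satisfies `ht p ≥ n - i + 1`; equivalently, `dim Supp H^{n-i}_I(R) ≤ i - 1`. -/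
theorem support_localCohomology_height_ge
    (R : Type u) [CommRing R] [IsLocalRing R] [IsNoetherianRing R]
    (n : ℕ) (hdim : ringKrullDim R = (n : ℕ))
    (hreg : ∃ s : Finset R, Ideal.span (s : Set R) = maximalIdeal R ∧ s.card = n)
    (I : Ideal R) (d : ℕ) (hd : 2 ≤ d)
    (hdimI : ringKrullDim (R ⧸ I) = (d : ℕ))
    (hequi : ∀ p ∈ I.minimalPrimes, ringKrullDim (R ⧸ p) = (d : ℕ))
    (i : ℕ) (hi1 : 1 ≤ i) (hid : i ≤ d - 1) :
    ∀ p ∈ Module.support R ((localCohomology I (n - i)).obj (ModuleCat.of R R)),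
      ((n - i + 1 : ℕ) : ℕ∞) ≤ Order.height p ∧
        ringKrullDim (R ⧸ p.asIdeal) ≤ ((i - 1 : ℕ) : ℕ) := by
  intro p hp
  have hR : IsRegularLocalRing R := by
    obtain ⟨s, hs, hc⟩ := hreg
    apply IsRegularLocalRing.of_spanFinrank_maximalIdeal_le
    rw [hdim]
    have := LCS.spanFinrank_le_of_card s hs
    rw [hc] at this
    exact_mod_cast this
  have hdn : d ≤ n := by
    have := ringKrullDim_quotient_le I
    rw [hdim, hdimI] at this
    exact_mod_cast this
  obtain ⟨k, hk⟩ : ∃ k, n - i = k + 1 := ⟨n - i - 1, by omega⟩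
  obtain ⟨a, b, ha, ha', hb, hab⟩ := LCS.ht_dim n hdim p
  have key : k + 2 ≤ a := by
    by_contra hlt
    rw [hk] at hp
    have : ∀ t : ℕ, ∃ t', ∃ h : t ≤ t', ∃ r ∉ p.asIdeal,
        ∀ e : Abelian.Ext (ModuleCat.of R (R ⧸ I ^ t)) (ModuleCat.of R R) (k+1),
        (Abelian.Ext.mk₀ (r • LCS.tr I h)).comp e (zero_add _) = 0 := by
      by_cases hI : I ≤ p.asIdeal
      · by_cases hak : a < k + 1
        · exact LCS.core_lt p.asIdeal I (k+1) (by rw [ha]; exact_mod_cast hak) _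
        · obtain ⟨q, hq, hqp⟩ := Ideal.exists_minimalPrimes_le hI
          have := hq.1.1
          have hne : q ≠ p.asIdeal := by
            rintro rfl
            have h1 := hequi _ hq
            rw [hb] at h1
            have : b = d := by exact_mod_cast h1
            omega
          exact LCS.core_eq p.asIdeal q I hq.1.2 (lt_of_le_of_ne hqp hne) (k+1)
            (by rw [ha]; exact_mod_cast (by omega : a ≤ k + 1)) _
      · exact LCS.core_not_le p.asIdeal I hI (k+1) _
    refine absurd hp (Module.notMem_support_iff'.mpr fun x => ?_)
    exact LCS.lc_kill p.asIdeal I k _ this x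
  constructor
  · rw [ha', hk]
    exact_mod_cast key
  · rw [hb]
    exact_mod_cast (by omega : b ≤ i - 1)
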